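/- arXiv:2011.08322 — 4 statements merged into one kernel-verified Lean document; each statement's English description precedes it below -/
import Mathlib

section
/- Let a_1, a_2, a_3, a_4, a_{123}, a_{1234}, b be real numbers with a_{1234} > 0. The series ∑_{i ∈ ℕ₊^4} i_1^{a_1} i_2^{a_2} i_3^{a_3} i_4^{a_4} (i_1 + i_2 + i_3)^{a_{123}} |i_1 + i_2 + i_3 − i_4|^{a_{1234}} / (i_1 + i_2 + i_3 + i_4)^b converges if and only if for every nonempty subset J ⊆ {1, 2, 3, 4} one has b > |J| + a_{1234} + ∑_{j ∈ J} a_j + a_{123}·[J ∩ {1,2,3} ≠ ∅], where [P] equals 1 if the condition P holds and 0 otherwise. -/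
/-! The summand is governed by the logarithms `lⱼ = log iⱼ`: up to a bounded factor it is at most
`exp Φ(l)`, where `Φ` is the piecewise linear function
`Φ(l) = ∑ aⱼ lⱼ + a₁₂₃ max(l₁, l₂, l₃) + (a₁₂₃₄ - b) max(l₁, l₂, l₃, l₄)`.
The function `Φ(l) + ∑ lⱼ` is linear on each chamber `l_{σ 1} ≥ l_{σ 2} ≥ l_{σ 3} ≥ l_{σ 4} ≥ 0`,
whose extremal rays are spanned by indicator vectors of nonempty sets `J`, and its value at the
indicator of `J` is the left-hand side of the condition for `J` minus `b`.

*Sufficiency.* If these finitely many values are all at most `-δ < 0`, then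
`Φ(l) + ∑ lⱼ ≤ -δ max lⱼ ≤ -(δ/4) ∑ lⱼ` (`chamber_bound`, `fan_bound`), so the summand is at most a
constant times `∏ iⱼ ^ (-(1 + δ/4))` (`term_upper`), which is summable (`summable_pi_prod`).
The factor `|i₁ + i₂ + i₃ - i₄| ^ a₁₂₃₄` is bounded through the triangle inequality, since `a₁₂₃₄ > 0`.

*Necessity.* Given `J`, restrict to the box where `iⱼ ∈ [N, 2N)` for `j ∈ J \ {4}`,
`i₄ ∈ [10N, 11N)` if `4 ∈ J`, and the remaining coordinates are `1`. There `|i₁ + i₂ + i₃ - i₄| ≥ N`,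
so each of the `N ^ |J|` terms is at least a constant times the expected power of `N`
(`term_lower`). If the condition for `J` failed, the sums over these boxes would stay bounded below
although the boxes leave every finite set, contradicting summability. -/

/-! ### The piecewise linear exponent -/

/-- In the chamber `n₁ ≥ n₂ ≥ n₃`, a nonnegative combination of the generators of the cone cut out
by the position of `n₄` gives the bound. -/
lemma chamber_bound {e₁ e₂ e₃ e₄ c D δ n₁ n₂ n₃ n₄ : ℝ}
    (h4 : e₄ - D ≤ -δ) (h1 : e₁ + c - D ≤ -δ) (h12 : e₁ + e₂ + c - D ≤ -δ)
    (h123 : e₁ + e₂ + e₃ + c - D ≤ -δ) (h14 : e₁ + e₄ + c - D ≤ -δ)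
    (h124 : e₁ + e₂ + e₄ + c - D ≤ -δ) (h1234 : e₁ + e₂ + e₃ + e₄ + c - D ≤ -δ)
    (n12 : n₂ ≤ n₁) (n23 : n₃ ≤ n₂) (n3 : 0 ≤ n₃) (n4 : 0 ≤ n₄) :
    e₁ * n₁ + e₂ * n₂ + e₃ * n₃ + e₄ * n₄ + c * n₁ - D * max n₁ n₄ ≤ -δ * max n₁ n₄ := by
  rcases le_total n₁ n₄ with k1 | k1
  · rw [max_eq_right k1]
    linarith [mul_le_mul_of_nonneg_left h4 (sub_nonneg.2 k1),
      mul_le_mul_of_nonneg_left h14 (sub_nonneg.2 n12),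
      mul_le_mul_of_nonneg_left h124 (sub_nonneg.2 n23), mul_le_mul_of_nonneg_left h1234 n3]
  rw [max_eq_left k1]
  rcases le_total n₂ n₄ with k2 | k2
  · linarith [mul_le_mul_of_nonneg_left h1 (sub_nonneg.2 k1),
      mul_le_mul_of_nonneg_left h14 (sub_nonneg.2 k2),
      mul_le_mul_of_nonneg_left h124 (sub_nonneg.2 n23), mul_le_mul_of_nonneg_left h1234 n3]
  rcases le_total n₃ n₄ with k3 | k3
  · linarith [mul_le_mul_of_nonneg_left h1 (sub_nonneg.2 n12),
      mul_le_mul_of_nonneg_left h12 (sub_nonneg.2 k2),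
      mul_le_mul_of_nonneg_left h124 (sub_nonneg.2 k3), mul_le_mul_of_nonneg_left h1234 n3]
  · linarith [mul_le_mul_of_nonneg_left h1 (sub_nonneg.2 n12),
      mul_le_mul_of_nonneg_left h12 (sub_nonneg.2 n23),
      mul_le_mul_of_nonneg_left h123 (sub_nonneg.2 k3), mul_le_mul_of_nonneg_left h1234 n4]

/-- A piecewise linear function that is at most `-δ` at every nonzero indicator vector is at most
`-δ` times the largest coordinate on the whole orthant. -/
lemma fan_bound {a₁ a₂ a₃ a₄ c A b δ : ℝ}
    (H : ∀ J : Finset (Fin 4), J.Nonempty →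
        (J.card : ℝ) + A + ∑ j ∈ J, ![a₁, a₂, a₃, a₄] j +
          (if (0 : Fin 4) ∈ J ∨ (1 : Fin 4) ∈ J ∨ (2 : Fin 4) ∈ J then c else 0) + δ ≤ b)
    {n₁ n₂ n₃ n₄ : ℝ} (p1 : 0 ≤ n₁) (p2 : 0 ≤ n₂) (p3 : 0 ≤ n₃) (p4 : 0 ≤ n₄) :
    (a₁ + 1) * n₁ + (a₂ + 1) * n₂ + (a₃ + 1) * n₃ + (a₄ + 1) * n₄
      + c * max (max n₁ n₂) n₃ - (b - A) * max (max (max n₁ n₂) n₃) n₄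
      ≤ -δ * max (max (max n₁ n₂) n₃) n₄ := by
  have h0 := H {0} (by simp)
  have h1 := H {1} (by simp)
  have h2 := H {2} (by simp)
  have h3 := H {3} (by simp)
  have h01 := H {0, 1} (by simp)
  have h02 := H {0, 2} (by simp)
  have h03 := H {0, 3} (by simp)
  have h12 := H {1, 2} (by simp)
  have h13 := H {1, 3} (by simp)
  have h23 := H {2, 3} (by simp)
  have h012 := H {0, 1, 2} (by simp)
  have h013 := H {0, 1, 3} (by simp)
  have h023 := H {0, 2, 3} (by simp)
  have h123 := H {1, 2, 3} (by simp)
  have h0123 := H {0, 1, 2, 3} (by simp)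
  simp at h0 h1 h2 h3 h01 h02 h03 h12 h13 h23 h012 h013 h023 h123 h0123
  rcases le_total n₁ n₂ with k12 | k12 <;> rcases le_total n₂ n₃ with k23 | k23 <;>
    rcases le_total n₁ n₃ with k13 | k13
  · rw [max_eq_right k12, max_eq_right k23]
    have := chamber_bound (e₁ := a₃ + 1) (e₂ := a₂ + 1) (e₃ := a₁ + 1) (e₄ := a₄ + 1) (c := c)
      (D := b - A) (δ := δ) (by linarith) (by linarith) (by linarith) (by linarith) (by linarith)
      (by linarith) (by linarith) k23 k12 p1 p4
    linarith
  · obtain rfl : n₁ = n₂ := by linarith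
    obtain rfl : n₁ = n₃ := by linarith
    rw [max_self, max_self]
    have := chamber_bound (e₁ := a₃ + 1) (e₂ := a₂ + 1) (e₃ := a₁ + 1) (e₄ := a₄ + 1) (c := c)
      (D := b - A) (δ := δ) (by linarith) (by linarith) (by linarith) (by linarith) (by linarith)
      (by linarith) (by linarith) k23 k12 p1 p4
    linarith
  · rw [max_eq_right k12, max_eq_left k23]
    have := chamber_bound (e₁ := a₂ + 1) (e₂ := a₃ + 1) (e₃ := a₁ + 1) (e₄ := a₄ + 1) (c := c)
      (D := b - A) (δ := δ) (by linarith) (by linarith) (by linarith) (by linarith) (by linarith)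
      (by linarith) (by linarith) k23 k13 p1 p4
    linarith
  · rw [max_eq_right k12, max_eq_left k23]
    have := chamber_bound (e₁ := a₂ + 1) (e₂ := a₁ + 1) (e₃ := a₃ + 1) (e₄ := a₄ + 1) (c := c)
      (D := b - A) (δ := δ) (by linarith) (by linarith) (by linarith) (by linarith) (by linarith)
      (by linarith) (by linarith) k12 k13 p3 p4
    linarith
  · rw [max_eq_left k12, max_eq_right k13]
    have := chamber_bound (e₁ := a₃ + 1) (e₂ := a₁ + 1) (e₃ := a₂ + 1) (e₄ := a₄ + 1) (c := c)
      (D := b - A) (δ := δ) (by linarith) (by linarith) (by linarith) (by linarith) (by linarith)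
      (by linarith) (by linarith) k13 k12 p2 p4
    linarith
  · rw [max_eq_left k12, max_eq_left k13]
    have := chamber_bound (e₁ := a₁ + 1) (e₂ := a₃ + 1) (e₃ := a₂ + 1) (e₄ := a₄ + 1) (c := c)
      (D := b - A) (δ := δ) (by linarith) (by linarith) (by linarith) (by linarith) (by linarith)
      (by linarith) (by linarith) k13 k23 p2 p4
    linarith
  · obtain rfl : n₁ = n₂ := by linarith
    obtain rfl : n₁ = n₃ := by linarith
    rw [max_self, max_self]
    have := chamber_bound (e₁ := a₃ + 1) (e₂ := a₂ + 1) (e₃ := a₁ + 1) (e₄ := a₄ + 1) (c := c)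
      (D := b - A) (δ := δ) (by linarith) (by linarith) (by linarith) (by linarith) (by linarith)
      (by linarith) (by linarith) k13 k12 p1 p4
    linarith
  · rw [max_eq_left k12, max_eq_left k13]
    have := chamber_bound (e₁ := a₁ + 1) (e₂ := a₂ + 1) (e₃ := a₃ + 1) (e₄ := a₄ + 1) (c := c)
      (D := b - A) (δ := δ) (by linarith) (by linarith) (by linarith) (by linarith) (by linarith)
      (by linarith) (by linarith) k12 k23 p3 p4
    linarith

/-! ### Passing to logarithms -/

lemma term_eq_exp (a₁ a₂ a₃ a₄ c A b d : ℝ) {x₁ x₂ x₃ x₄ : ℝ}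
    (p1 : 0 < x₁) (p2 : 0 < x₂) (p3 : 0 < x₃) (p4 : 0 < x₄) :
    x₁ ^ a₁ * x₂ ^ a₂ * x₃ ^ a₃ * x₄ ^ a₄ * (x₁ + x₂ + x₃) ^ c * d ^ A / (x₁ + x₂ + x₃ + x₄) ^ b =
      Real.exp (a₁ * Real.log x₁ + a₂ * Real.log x₂ + a₃ * Real.log x₃ + a₄ * Real.log x₄
        + c * Real.log (x₁ + x₂ + x₃) - b * Real.log (x₁ + x₂ + x₃ + x₄)) * d ^ A := by
  have hs : 0 < x₁ + x₂ + x₃ := by positivity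
  have hS : 0 < x₁ + x₂ + x₃ + x₄ := by positivity
  rw [Real.rpow_def_of_pos p1, Real.rpow_def_of_pos p2, Real.rpow_def_of_pos p3,
    Real.rpow_def_of_pos p4, Real.rpow_def_of_pos hs, Real.rpow_def_of_pos hS, Real.exp_sub]
  simp only [Real.exp_add]
  ring_nf

lemma mul_near {a u v K : ℝ} (h : |u - v| ≤ K) :
    a * v - |a| * K ≤ a * u ∧ a * u ≤ a * v + |a| * K := by
  have h1 : |a * (u - v)| ≤ |a| * K := by
    rw [abs_mul]
    exact mul_le_mul_of_nonneg_left h (abs_nonneg a)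
  have := abs_le.1 h1
  constructor <;> linarith [this.1, this.2]

lemma log_near {x y C : ℝ} (hy : 0 < y) (h1 : y ≤ x) (h2 : x ≤ C * y) :
    |Real.log x - Real.log y| ≤ Real.log C := by
  have hx : 0 < x := hy.trans_le h1
  have hC : 0 < C := pos_of_mul_pos_left (hx.trans_le h2) hy.le
  have l1 := Real.log_le_log hy h1
  have l2 := Real.log_le_log hx h2
  rw [Real.log_mul hC.ne' hy.ne'] at l2
  rw [abs_le]
  constructor <;> linarith

lemma log_max {x y : ℝ} (hx : 0 < x) (hy : 0 < y) :
    Real.log (max x y) = max (Real.log x) (Real.log y) := by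
  rcases le_total x y with k | k
  · rw [max_eq_right k, max_eq_right (Real.log_le_log hx k)]
  · rw [max_eq_left k, max_eq_left (Real.log_le_log hy k)]

/-! ### Sufficiency -/

/-- The pointwise bound behind sufficiency: the summand is dominated by a summable product. -/
lemma term_upper {a₁ a₂ a₃ a₄ c A b δ : ℝ} (hA : 0 < A) (hδ : 0 < δ)
    (H : ∀ J : Finset (Fin 4), J.Nonempty →
        (J.card : ℝ) + A + ∑ j ∈ J, ![a₁, a₂, a₃, a₄] j +
          (if (0 : Fin 4) ∈ J ∨ (1 : Fin 4) ∈ J ∨ (2 : Fin 4) ∈ J then c else 0) + δ ≤ b)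
    {x₁ x₂ x₃ x₄ : ℝ} (p1 : 1 ≤ x₁) (p2 : 1 ≤ x₂) (p3 : 1 ≤ x₃) (p4 : 1 ≤ x₄) :
    x₁ ^ a₁ * x₂ ^ a₂ * x₃ ^ a₃ * x₄ ^ a₄ * (x₁ + x₂ + x₃) ^ c * |x₁ + x₂ + x₃ - x₄| ^ A
        / (x₁ + x₂ + x₃ + x₄) ^ b ≤
      Real.exp (|c| * Real.log 3 + |A - b| * Real.log 4) *
        (x₁ ^ (-(1 + δ / 4)) * x₂ ^ (-(1 + δ / 4)) * x₃ ^ (-(1 + δ / 4)) * x₄ ^ (-(1 + δ / 4))) := by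
  have q1 : 0 < x₁ := by linarith
  have q2 : 0 < x₂ := by linarith
  have q3 : 0 < x₃ := by linarith
  have q4 : 0 < x₄ := by linarith
  have hS : 0 < x₁ + x₂ + x₃ + x₄ := by positivity
  rw [term_eq_exp _ _ _ _ _ _ _ _ q1 q2 q3 q4]
  have hd : |x₁ + x₂ + x₃ - x₄| ^ A ≤ (x₁ + x₂ + x₃ + x₄) ^ A := by
    apply Real.rpow_le_rpow (abs_nonneg _) _ hA.le
    rw [abs_le]
    constructor <;> linarith
  refine (mul_le_mul_of_nonneg_left hd (Real.exp_pos _).le).trans ?_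
  rw [Real.rpow_def_of_pos hS, Real.rpow_def_of_pos q1, Real.rpow_def_of_pos q2,
    Real.rpow_def_of_pos q3, Real.rpow_def_of_pos q4]
  simp only [← Real.exp_add]
  rw [Real.exp_le_exp]
  have n1 : x₁ ≤ max (max x₁ x₂) x₃ := (le_max_left _ _).trans (le_max_left _ _)
  have n2 : x₂ ≤ max (max x₁ x₂) x₃ := (le_max_right _ _).trans (le_max_left _ _)
  have n3 : x₃ ≤ max (max x₁ x₂) x₃ := le_max_right _ _
  have m1 : max (max x₁ x₂) x₃ ≤ x₁ + x₂ + x₃ := by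
    simp only [max_le_iff]
    refine ⟨⟨?_, ?_⟩, ?_⟩ <;> linarith
  have m2 : max (max (max x₁ x₂) x₃) x₄ ≤ x₁ + x₂ + x₃ + x₄ :=
    max_le (by linarith) (by linarith)
  have n0 := le_max_left (max (max x₁ x₂) x₃) x₄
  have n4 := le_max_right (max (max x₁ x₂) x₃) x₄
  have r3 : 0 < max (max x₁ x₂) x₃ := q1.trans_le n1
  have r4 : 0 < max (max (max x₁ x₂) x₃) x₄ := r3.trans_le n0
  have g3 := (mul_near (a := c) (log_near (C := 3) r3 m1 (by linarith))).2
  have g4 := (mul_near (a := A - b) (log_near (C := 4) r4 m2 (by linarith))).2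
  rw [log_max r3 q4] at g4
  rw [log_max (lt_max_of_lt_left q1) q3, log_max q1 q2] at g3 g4
  have l1 := Real.log_nonneg p1
  have l2 := Real.log_nonneg p2
  have l3 := Real.log_nonneg p3
  have l4 := Real.log_nonneg p4
  have F := fan_bound H l1 l2 l3 l4
  generalize Real.log x₁ = y₁ at *
  generalize Real.log x₂ = y₂ at *
  generalize Real.log x₃ = y₃ at *
  generalize Real.log x₄ = y₄ at *
  have k0 := le_max_left (max (max y₁ y₂) y₃) y₄
  have k1 : y₁ ≤ max (max y₁ y₂) y₃ := (le_max_left _ _).trans (le_max_left _ _)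
  have k2 : y₂ ≤ max (max y₁ y₂) y₃ := (le_max_right _ _).trans (le_max_left _ _)
  have k3 : y₃ ≤ max (max y₁ y₂) y₃ := le_max_right _ _
  have k4 := le_max_right (max (max y₁ y₂) y₃) y₄
  have hm : (y₁ + y₂ + y₃ + y₄) / 4 ≤ max (max (max y₁ y₂) y₃) y₄ := by linarith
  have := mul_le_mul_of_nonneg_left hm hδ.le
  linarith

lemma summable_pi_prod {ι κ : Type*} [Fintype ι] {g : κ → ℝ} (hg : Summable g)
    (h0 : ∀ k, 0 ≤ g k) : Summable (fun i : ι → κ => ∏ j, g (i j)) := by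
  classical
  refine summable_of_sum_le (c := ∏ _j : ι, ∑' k, g k)
    (fun i => Finset.prod_nonneg fun j _ => h0 _) fun u => ?_
  have hu : u ⊆ Fintype.piFinset (fun j : ι => u.image fun i => i j) := by
    intro i hi
    rw [Fintype.mem_piFinset]
    exact fun j => Finset.mem_image_of_mem _ hi
  refine (Finset.sum_le_sum_of_subset_of_nonneg hu
    fun i _ _ => Finset.prod_nonneg fun j _ => h0 _).trans ?_
  rw [← Finset.prod_univ_sum]
  exact Finset.prod_le_prod (fun j _ => Finset.sum_nonneg fun k _ => h0 k)
    fun j _ => hg.sum_le_tsum _ fun k _ => h0 k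

/-! ### Necessity -/

/-- The pointwise bound behind necessity: `t` is the scale `N`, comparable to the full sum, while
`Xⱼ` and `s`, each `N` or `1` in the application, are comparable to the coordinates and to the sum
of the first three. -/
lemma term_lower {a₁ a₂ a₃ a₄ c A b t X₁ X₂ X₃ X₄ s x₁ x₂ x₃ x₄ C : ℝ} (hA : 0 < A) (ht : 0 < t)
    (h1 : 0 < X₁) (h2 : 0 < X₂) (h3 : 0 < X₃) (h4 : 0 < X₄) (hs : 0 < s)
    (u1 : X₁ ≤ x₁ ∧ x₁ ≤ C * X₁) (u2 : X₂ ≤ x₂ ∧ x₂ ≤ C * X₂) (u3 : X₃ ≤ x₃ ∧ x₃ ≤ C * X₃)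
    (u4 : X₄ ≤ x₄ ∧ x₄ ≤ C * X₄) (us : s ≤ x₁ + x₂ + x₃ ∧ x₁ + x₂ + x₃ ≤ C * s)
    (uS : t ≤ x₁ + x₂ + x₃ + x₄ ∧ x₁ + x₂ + x₃ + x₄ ≤ C * t)
    (ud : t ≤ |x₁ + x₂ + x₃ - x₄|) :
    Real.exp (a₁ * Real.log X₁ + a₂ * Real.log X₂ + a₃ * Real.log X₃ + a₄ * Real.log X₄
        + c * Real.log s + (A - b) * Real.log t
        - (|a₁| + |a₂| + |a₃| + |a₄| + |c| + |b|) * Real.log C) ≤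
    x₁ ^ a₁ * x₂ ^ a₂ * x₃ ^ a₃ * x₄ ^ a₄ * (x₁ + x₂ + x₃) ^ c * |x₁ + x₂ + x₃ - x₄| ^ A
        / (x₁ + x₂ + x₃ + x₄) ^ b := by
  rw [term_eq_exp _ _ _ _ _ _ _ _ (h1.trans_le u1.1) (h2.trans_le u2.1) (h3.trans_le u3.1)
    (h4.trans_le u4.1)]
  refine le_trans ?_ (mul_le_mul_of_nonneg_left (Real.rpow_le_rpow ht.le ud hA.le)
    (Real.exp_pos _).le)
  rw [Real.rpow_def_of_pos ht, ← Real.exp_add, Real.exp_le_exp]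
  have g1 := (mul_near (a := a₁) (log_near h1 u1.1 u1.2)).1
  have g2 := (mul_near (a := a₂) (log_near h2 u2.1 u2.2)).1
  have g3 := (mul_near (a := a₃) (log_near h3 u3.1 u3.2)).1
  have g4 := (mul_near (a := a₄) (log_near h4 u4.1 u4.2)).1
  have gs := (mul_near (a := c) (log_near hs us.1 us.2)).1
  have gS := (mul_near (a := b) (log_near ht uS.1 uS.2)).2
  linarith

/-- The box used for necessity: coordinate `j ∈ J` runs over `[λⱼ N, (λⱼ + 1) N)` with `λ₃ = 10` and
`λⱼ = 1` otherwise, and the coordinates outside `J` equal `1`. The large `λ₃` keeps the last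
coordinate away from the sum of the others. -/
def box (J : Finset (Fin 4)) (N : ℕ+) : Finset (Fin 4 → ℕ+) :=
  Fintype.piFinset fun j =>
    if j ∈ J then Finset.Ico ((![1, 1, 1, 10] : Fin 4 → ℕ+) j * N)
      (((![1, 1, 1, 10] : Fin 4 → ℕ+) j + 1) * N) else {1}

lemma card_box (J : Finset (Fin 4)) (N : ℕ+) : (box J N).card = (N : ℕ) ^ J.card := by
  have : ∀ j : Fin 4, (if j ∈ J then Finset.Ico ((![1, 1, 1, 10] : Fin 4 → ℕ+) j * N)
      (((![1, 1, 1, 10] : Fin 4 → ℕ+) j + 1) * N) else {1}).card =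
      if j ∈ J then (N : ℕ) else 1 := by
    intro j
    split_ifs
    · rw [PNat.card_Ico]
      push_cast
      rw [add_mul, one_mul, Nat.add_sub_cancel_left]
    · simp
  rw [box, Fintype.card_piFinset]
  simp only [this]
  simp

/-- On the box at scale `N` every term is at least a constant times `N` to the value of the
condition for `J`, without the contribution `|J|` of the number of terms. -/
lemma box_term_lower {a₁ a₂ a₃ a₄ c A b : ℝ} (hA : 0 < A) {J : Finset (Fin 4)} (hJ : J.Nonempty)
    {N : ℕ+} {i : Fin 4 → ℕ+} (hi : i ∈ box J N) :
    Real.exp ((A + ∑ j ∈ J, ![a₁, a₂, a₃, a₄] j +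
          (if (0 : Fin 4) ∈ J ∨ (1 : Fin 4) ∈ J ∨ (2 : Fin 4) ∈ J then c else 0) - b)
          * Real.log ((N : ℕ) : ℝ)
        - (|a₁| + |a₂| + |a₃| + |a₄| + |c| + |b|) * Real.log 17) ≤
      ((i 0 : ℕ) : ℝ) ^ a₁ * ((i 1 : ℕ) : ℝ) ^ a₂ * ((i 2 : ℕ) : ℝ) ^ a₃ *
          ((i 3 : ℕ) : ℝ) ^ a₄ *
          (((i 0 : ℕ) : ℝ) + ((i 1 : ℕ) : ℝ) + ((i 2 : ℕ) : ℝ)) ^ c *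
          |((i 0 : ℕ) : ℝ) + ((i 1 : ℕ) : ℝ) + ((i 2 : ℕ) : ℝ) - ((i 3 : ℕ) : ℝ)| ^ A /
          (((i 0 : ℕ) : ℝ) + ((i 1 : ℕ) : ℝ) + ((i 2 : ℕ) : ℝ) + ((i 3 : ℕ) : ℝ)) ^ b := by
  have hN : (1 : ℝ) ≤ ((N : ℕ) : ℝ) := by exact_mod_cast N.2
  have key : ∀ j, (j ∈ J → (((![1, 1, 1, 10] : Fin 4 → ℕ+) j : ℕ) : ℝ) * ((N : ℕ) : ℝ)
        ≤ ((i j : ℕ) : ℝ) ∧ ((i j : ℕ) : ℝ) ≤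
        ((((![1, 1, 1, 10] : Fin 4 → ℕ+) j : ℕ) : ℝ) + 1) * ((N : ℕ) : ℝ)) ∧
      (j ∉ J → ((i j : ℕ) : ℝ) = 1) := by
    intro j
    have := Fintype.mem_piFinset.1 hi j
    refine ⟨fun hj => ?_, fun hj => ?_⟩
    · rw [if_pos hj, Finset.mem_Ico, ← PNat.coe_le_coe, ← PNat.coe_lt_coe] at this
      push_cast at this
      exact ⟨by exact_mod_cast this.1, by exact_mod_cast this.2.le⟩
    · rw [if_neg hj, Finset.mem_singleton] at this
      simp [this]
  have k0 := key 0
  have k1 := key 1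
  have k2 := key 2
  have k3 := key 3
  clear key
  generalize ((i 0 : ℕ) : ℝ) = x₀ at *
  generalize ((i 1 : ℕ) : ℝ) = x₁ at *
  generalize ((i 2 : ℕ) : ℝ) = x₂ at *
  generalize ((i 3 : ℕ) : ℝ) = x₃ at *
  generalize ((N : ℕ) : ℝ) = t at *
  simp at k0 k1 k2 k3
  have hsum : ∑ j ∈ J, ![a₁, a₂, a₃, a₄] j =
      (if (0 : Fin 4) ∈ J then a₁ else 0) + (if (1 : Fin 4) ∈ J then a₂ else 0) +
      (if (2 : Fin 4) ∈ J then a₃ else 0) + (if (3 : Fin 4) ∈ J then a₄ else 0) := by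
    have h := Finset.sum_ite_mem Finset.univ J ![a₁, a₂, a₃, a₄]
    rw [Finset.univ_inter] at h
    rw [← h, Fin.sum_univ_four]
    simp
  have hne : (0 : Fin 4) ∈ J ∨ (1 : Fin 4) ∈ J ∨ (2 : Fin 4) ∈ J ∨ (3 : Fin 4) ∈ J := by
    obtain ⟨j, hj⟩ := hJ
    fin_cases j <;> simp_all
  rw [hsum]
  have ht : 0 < t := by linarith
  by_cases m0 : (0 : Fin 4) ∈ J <;> by_cases m1 : (1 : Fin 4) ∈ J <;>
    by_cases m2 : (2 : Fin 4) ∈ J <;> by_cases m3 : (3 : Fin 4) ∈ J <;>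
    simp only [m0, m1, m2, m3, or_true, or_false, or_self, if_true, if_false,
      not_true_eq_false, not_false_eq_true, true_imp_iff, false_imp_iff, true_and, and_true]
      at k0 k1 k2 k3 hne ⊢
  all_goals
    refine le_trans (Real.exp_le_exp.2 (le_of_eq ?_))
      (term_lower (C := 17) hA ht (X₁ := if (0 : Fin 4) ∈ J then t else 1)
        (X₂ := if (1 : Fin 4) ∈ J then t else 1)
        (X₃ := if (2 : Fin 4) ∈ J then t else 1) (X₄ := if (3 : Fin 4) ∈ J then t else 1)
        (s := if (0 : Fin 4) ∈ J ∨ (1 : Fin 4) ∈ J ∨ (2 : Fin 4) ∈ J then t else 1)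
        ?_ ?_ ?_ ?_ ?_ ?_ ?_ ?_ ?_ ?_ ?_ ?_)
    · simp only [m0, m1, m2, m3, true_or, or_true, or_self, if_true, if_false, Real.log_one]
      ring
    all_goals try simp only [m0, m1, m2, m3, true_or, or_true, or_self, if_true, if_false]
    any_goals linarith
    any_goals (constructor <;> linarith)
    rw [le_abs]
    first
      | (left; linarith)
      | (right; linarith)

/-! ### The convergence criterion -/

/-- Convergence criterion for
`∑_{i ∈ ℕ₊⁴} i₁^{a₁} i₂^{a₂} i₃^{a₃} i₄^{a₄} (i₁+i₂+i₃)^{a₁₂₃} |i₁+i₂+i₃-i₄|^{a₁₂₃₄}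
/ (i₁+i₂+i₃+i₄)^b` with `a₁₂₃₄ > 0`. -/
theorem zeta_series_four_vars_abs_iff (a₁ a₂ a₃ a₄ a₁₂₃ a₁₂₃₄ b : ℝ)
    (h : 0 < a₁₂₃₄) :
    Summable (fun i : Fin 4 → ℕ+ =>
        ((i 0 : ℕ) : ℝ) ^ a₁ * ((i 1 : ℕ) : ℝ) ^ a₂ * ((i 2 : ℕ) : ℝ) ^ a₃ *
          ((i 3 : ℕ) : ℝ) ^ a₄ *
          (((i 0 : ℕ) : ℝ) + ((i 1 : ℕ) : ℝ) + ((i 2 : ℕ) : ℝ)) ^ a₁₂₃ *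
          |((i 0 : ℕ) : ℝ) + ((i 1 : ℕ) : ℝ) + ((i 2 : ℕ) : ℝ) - ((i 3 : ℕ) : ℝ)| ^ a₁₂₃₄ /
          (((i 0 : ℕ) : ℝ) + ((i 1 : ℕ) : ℝ) + ((i 2 : ℕ) : ℝ) + ((i 3 : ℕ) : ℝ)) ^ b) ↔
      ∀ J : Finset (Fin 4), J.Nonempty →
        (J.card : ℝ) + a₁₂₃₄ + ∑ j ∈ J, ![a₁, a₂, a₃, a₄] j +
          (if (0 : Fin 4) ∈ J ∨ (1 : Fin 4) ∈ J ∨ (2 : Fin 4) ∈ J then a₁₂₃ else 0) < b := by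
  constructor
  · intro hf J hJ
    by_contra! hb
    set f := fun i : Fin 4 → ℕ+ =>
        ((i 0 : ℕ) : ℝ) ^ a₁ * ((i 1 : ℕ) : ℝ) ^ a₂ * ((i 2 : ℕ) : ℝ) ^ a₃ *
          ((i 3 : ℕ) : ℝ) ^ a₄ *
          (((i 0 : ℕ) : ℝ) + ((i 1 : ℕ) : ℝ) + ((i 2 : ℕ) : ℝ)) ^ a₁₂₃ *
          |((i 0 : ℕ) : ℝ) + ((i 1 : ℕ) : ℝ) + ((i 2 : ℕ) : ℝ) - ((i 3 : ℕ) : ℝ)| ^ a₁₂₃₄ /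
          (((i 0 : ℕ) : ℝ) + ((i 1 : ℕ) : ℝ) + ((i 2 : ℕ) : ℝ) + ((i 3 : ℕ) : ℝ)) ^ b with hfdef
    set κ := (|a₁| + |a₂| + |a₃| + |a₄| + |a₁₂₃| + |b|) * Real.log 17 with hκ
    obtain ⟨s, hs⟩ := summable_iff_vanishing_norm.1 hf (Real.exp (-κ)) (Real.exp_pos _)
    obtain ⟨j, hj⟩ := hJ
    let N : ℕ+ := ⟨s.sup (fun i => (i j : ℕ)) + 1, Nat.succ_pos _⟩
    -- On the box the coordinate `j` is at least `N`, hence larger than on all of `s`.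
    have hdis : Disjoint (box J N) s := by
      rw [Finset.disjoint_left]
      intro i hi his
      have h1 := Fintype.mem_piFinset.1 hi j
      rw [if_pos hj, Finset.mem_Ico] at h1
      have h2 : N ≤ i j := le_trans (le_mul_of_one_le_left' one_le) h1.1
      have h3 : (i j : ℕ) ≤ s.sup (fun i => (i j : ℕ)) :=
        Finset.le_sup (f := fun i : Fin 4 → ℕ+ => (i j : ℕ)) his
      have h4 : s.sup (fun i => (i j : ℕ)) + 1 ≤ (i j : ℕ) := h2
      omega
    have hlt := (le_abs_self _).trans_lt (hs _ hdis)
    have hN : (1 : ℝ) ≤ ((N : ℕ) : ℝ) := by exact_mod_cast N.2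
    have hge := Finset.card_nsmul_le_sum (box J N) f _
      fun i hi => box_term_lower (b := b) (c := a₁₂₃) (a₁ := a₁) (a₂ := a₂) (a₃ := a₃) (a₄ := a₄)
        h ⟨j, hj⟩ hi
    rw [card_box, nsmul_eq_mul, ← hκ] at hge
    refine absurd hlt (not_lt.2 (le_trans ?_ hge))
    have hpow : (((N : ℕ) ^ J.card : ℕ) : ℝ) =
        Real.exp ((J.card : ℝ) * Real.log ((N : ℕ) : ℝ)) := by
      rw [← Real.log_pow, Real.exp_log (by positivity)]
      push_cast
      rfl
    rw [hpow, ← Real.exp_add, Real.exp_le_exp]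
    have := mul_nonneg (sub_nonneg.2 hb) (Real.log_nonneg hN)
    linarith
  · intro H
    -- A uniform gap `δ` exists because there are finitely many sets `J`.
    obtain ⟨δ, hδ, H'⟩ : ∃ δ : ℝ, 0 < δ ∧ ∀ J : Finset (Fin 4), J.Nonempty →
        (J.card : ℝ) + a₁₂₃₄ + ∑ j ∈ J, ![a₁, a₂, a₃, a₄] j +
          (if (0 : Fin 4) ∈ J ∨ (1 : Fin 4) ∈ J ∨ (2 : Fin 4) ∈ J then a₁₂₃ else 0) + δ ≤ b := by
      obtain ⟨J₀, hJ₀, hmax⟩ := Finset.exists_max_image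
        (Finset.univ.filter fun J : Finset (Fin 4) => J.Nonempty)
        (fun J => (J.card : ℝ) + a₁₂₃₄ + ∑ j ∈ J, ![a₁, a₂, a₃, a₄] j +
          (if (0 : Fin 4) ∈ J ∨ (1 : Fin 4) ∈ J ∨ (2 : Fin 4) ∈ J then a₁₂₃ else 0))
        ⟨{0}, by simp⟩
      refine ⟨_, sub_pos.2 (H J₀ (Finset.mem_filter.1 hJ₀).2), fun J hJ => ?_⟩
      have := hmax J (by simpa using hJ)
      linarith
    have hg : Summable fun k : ℕ+ => ((k : ℕ) : ℝ) ^ (-(1 + δ / 4)) :=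
      (Real.summable_nat_rpow.2 (by linarith)).comp_injective PNat.coe_injective
    have hprod := (summable_pi_prod (ι := Fin 4) hg fun k => by positivity).mul_left
      (Real.exp (|a₁₂₃| * Real.log 3 + |a₁₂₃₄ - b| * Real.log 4))
    refine Summable.of_nonneg_of_le (fun i => by positivity) (fun i => ?_) hprod
    have p : ∀ j, (1 : ℝ) ≤ ((i j : ℕ) : ℝ) := fun j => by exact_mod_cast (i j).2
    rw [Fin.prod_univ_four]
    exact term_upper h hδ H' (p 0) (p 1) (p 2) (p 3)
end

section
/- Let a_1, a_2, a_3, a_4, a_{12}, a_{34}, b be real numbers with a_1 + a_{12} > −1. The series ∑_{i ∈ ℕ₊^4} i_1^{a_1} i_2^{a_2} i_3^{a_3} i_4^{a_4} (i_1 + i_2)^{a_{12}} (i_3 + i_4)^{a_{34}} / (i_1 + i_2 + i_3 + i_4)^b converges if and only if for every nonempty subset J ⊆ {1, 2, 3, 4} one has b > |J| + ∑_{j ∈ J} a_j + a_{12}·[J ∩ {1,2} ≠ ∅] + a_{34}·[J ∩ {3,4} ≠ ∅], where [P] equals 1 if the condition P holds and 0 otherwise. -/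
/-!
Put `x j = log (i j)`. Up to a bounded additive error, the logarithm of the general term is the
piecewise linear function `tropical a a₁₂ a₃₄ b x`, in which the logarithm of each sum is replaced
by the maximum of the logarithms. Its value at the indicator vector of a nonempty `J`, increased by
`|J|`, is the left-hand side of the `J`-th condition minus `b`.

*Sufficiency.* `tropical` is linear along chains of indicator vectors, and every nonnegative `x` is
a nonnegative combination of such a chain; so it is nonpositive on the nonnegative orthant as soon
as it is nonpositive at indicator vectors (`nonpos_of_layers`). Since the conditions are strict and
finite in number, this applies with `a j` replaced by `a j + 1 + ε` for some `ε > 0`, and bounds the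
general term by a constant times `∏ j, (i j) ^ (-(1 + ε))`, which is summable.

*Necessity.* On the block where `N ≤ i j < 2 * N` for `j ∈ J` and `i j = 1` otherwise, there are
`N ^ |J|` terms, each at least a constant times `N ^ (tropical a a₁₂ a₃₄ b 1_J)`. If the `J`-th
condition fails, the sums over these blocks are bounded below by a positive constant, although the
blocks leave every finite set: this contradicts the Cauchy criterion.
-/

open Finset

/-! ### The general term and its piecewise linear approximation -/

/-- The logarithm of the general term as a function of `x j = log (i j)`, with each
`log (∑ i j)` replaced by `max (x j)`. -/
noncomputable def tropical (a : Fin 4 → ℝ) (p q b : ℝ) (x : Fin 4 → ℝ) : ℝ :=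
  ∑ j, a j * x j + p * max (x 0) (x 1) + q * max (x 2) (x 3) -
    b * max (max (x 0) (x 1)) (max (x 2) (x 3))

/-- The indicator vector of `J`. -/
noncomputable def indicatorVec (J : Finset (Fin 4)) (j : Fin 4) : ℝ := if j ∈ J then 1 else 0

/-- The logarithm of the general term of the series. -/
noncomputable def logTerm (a : Fin 4 → ℝ) (p q b : ℝ) (i : Fin 4 → ℕ+) : ℝ :=
  ∑ j, a j * Real.log (i j : ℕ) + p * Real.log ((i 0 : ℕ) + (i 1 : ℕ)) +
    q * Real.log ((i 2 : ℕ) + (i 3 : ℕ)) -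
    b * Real.log ((i 0 : ℕ) + (i 1 : ℕ) + (i 2 : ℕ) + (i 3 : ℕ))

lemma cast_pnat_pos (n : ℕ+) : (0 : ℝ) < ((n : ℕ) : ℝ) := by exact_mod_cast n.pos

lemma term_eq_exp_s11 (a₁ a₂ a₃ a₄ p q b : ℝ) (i : Fin 4 → ℕ+) :
    ((i 0 : ℕ) : ℝ) ^ a₁ * ((i 1 : ℕ) : ℝ) ^ a₂ * ((i 2 : ℕ) : ℝ) ^ a₃ *
          ((i 3 : ℕ) : ℝ) ^ a₄ *
          (((i 0 : ℕ) : ℝ) + ((i 1 : ℕ) : ℝ)) ^ p *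
          (((i 2 : ℕ) : ℝ) + ((i 3 : ℕ) : ℝ)) ^ q /
          (((i 0 : ℕ) : ℝ) + ((i 1 : ℕ) : ℝ) + ((i 2 : ℕ) : ℝ) + ((i 3 : ℕ) : ℝ)) ^ b
      = Real.exp (logTerm ![a₁, a₂, a₃, a₄] p q b i) := by
  have h0 := cast_pnat_pos (i 0)
  have h1 := cast_pnat_pos (i 1)
  have h2 := cast_pnat_pos (i 2)
  have h3 := cast_pnat_pos (i 3)
  rw [Real.rpow_def_of_pos h0, Real.rpow_def_of_pos h1, Real.rpow_def_of_pos h2,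
    Real.rpow_def_of_pos h3, Real.rpow_def_of_pos (by positivity),
    Real.rpow_def_of_pos (by positivity), Real.rpow_def_of_pos (by positivity)]
  simp only [← Real.exp_add, ← Real.exp_sub]
  congr 1
  simp [logTerm, Fin.sum_univ_four]
  ring

lemma abs_log_add_sub_max {u v : ℝ} (hu : 0 < u) (hv : 0 < v) :
    |Real.log (u + v) - max (Real.log u) (Real.log v)| ≤ Real.log 2 := by
  wlog huv : u ≤ v generalizing u v
  · rw [add_comm, max_comm]
    exact this hv hu (le_of_not_ge huv)
  rw [max_eq_right (Real.log_le_log hu huv)]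
  have h1 : Real.log v ≤ Real.log (u + v) := Real.log_le_log hv (by linarith)
  have h2 : Real.log (u + v) ≤ Real.log (2 * v) := Real.log_le_log (by linarith) (by linarith)
  rw [Real.log_mul (by norm_num) hv.ne'] at h2
  rw [abs_le]
  constructor <;> linarith [Real.log_nonneg (show (1 : ℝ) ≤ 2 by norm_num)]

lemma abs_max_sub_max_le {u v u' v' δ : ℝ} (hu : |u - u'| ≤ δ) (hv : |v - v'| ≤ δ) :
    |max u v - max u' v'| ≤ δ :=
  (abs_max_sub_max_le_max u v u' v').trans (max_le hu hv)

/-- The logarithm of the general term differs from `tropical` by a bounded amount. -/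
lemma exists_abs_logTerm_sub_tropical_le (a : Fin 4 → ℝ) (p q b : ℝ) :
    ∃ C, ∀ i : Fin 4 → ℕ+,
      |logTerm a p q b i - tropical a p q b (fun j => Real.log (i j : ℕ))| ≤ C := by
  refine ⟨|p| * Real.log 2 + |q| * Real.log 2 + |b| * (Real.log 2 + Real.log 2), fun i => ?_⟩
  have h0 := cast_pnat_pos (i 0)
  have h1 := cast_pnat_pos (i 1)
  have h2 := cast_pnat_pos (i 2)
  have h3 := cast_pnat_pos (i 3)
  have hp := abs_log_add_sub_max h0 h1
  have hq := abs_log_add_sub_max h2 h3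
  have hb := (abs_sub_le _ _ _).trans
    (add_le_add (abs_log_add_sub_max (add_pos h0 h1) (add_pos h2 h3)) (abs_max_sub_max_le hp hq))
  rw [← add_assoc] at hb
  have hp' := mul_le_mul_of_nonneg_left hp (abs_nonneg p)
  have hq' := mul_le_mul_of_nonneg_left hq (abs_nonneg q)
  have hb' := mul_le_mul_of_nonneg_left hb (abs_nonneg b)
  rw [← abs_mul] at hp' hq' hb'
  simp only [logTerm, tropical]
  rw [abs_le] at *
  constructor <;> linarith

/-- `tropical` is Lipschitz for the sup norm. -/
lemma exists_tropical_lipschitz (a : Fin 4 → ℝ) (p q b : ℝ) :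
    ∃ K, ∀ x y : Fin 4 → ℝ, ∀ δ, (∀ j, |x j - y j| ≤ δ) →
      |tropical a p q b x - tropical a p q b y| ≤ K * δ := by
  refine ⟨∑ j, |a j| + |p| + |q| + |b|, fun x y δ h => ?_⟩
  have hs : |∑ j, a j * (x j - y j)| ≤ ∑ j, |a j| * δ :=
    (abs_sum_le_sum_abs _ _).trans (sum_le_sum fun j _ => by
      rw [abs_mul]; exact mul_le_mul_of_nonneg_left (h j) (abs_nonneg _))
  simp only [mul_sub, sum_sub_distrib, ← sum_mul] at hs
  have hp := abs_max_sub_max_le (h 0) (h 1)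
  have hq := abs_max_sub_max_le (h 2) (h 3)
  have hb := abs_max_sub_max_le hp hq
  have hp' := mul_le_mul_of_nonneg_left hp (abs_nonneg p)
  have hq' := mul_le_mul_of_nonneg_left hq (abs_nonneg q)
  have hb' := mul_le_mul_of_nonneg_left hb (abs_nonneg b)
  rw [← abs_mul] at hp' hq' hb'
  simp only [tropical]
  rw [abs_le] at *
  constructor <;> linarith

/-! ### Linearity along chains of indicator vectors -/

/-- Linearity of `tropical` along chains: adding `m • 1_J` to a nonnegative vector supported in `J`
raises every maximum over an index set meeting `J` by exactly `m`, and leaves the others at `0`. -/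
lemma tropical_layer (a : Fin 4 → ℝ) (p q b : ℝ) (J : Finset (Fin 4)) {m : ℝ} (hm : 0 ≤ m)
    {y : Fin 4 → ℝ} (hy : ∀ j, 0 ≤ y j) (hJ : ∀ j ∉ J, y j = 0) :
    tropical a p q b (fun j => m * indicatorVec J j + y j) =
      m * tropical a p q b (indicatorVec J) + tropical a p q b y := by
  have key : ∀ s t u v : ℝ, (s = 0 ∧ u = 0 ∨ s = 1 ∧ 0 ≤ u) → (t = 0 ∧ v = 0 ∨ t = 1 ∧ 0 ≤ v) →
      max (m * s + u) (m * t + v) = m * max s t + max u v ∧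
      (max s t = 0 ∧ max u v = 0 ∨ max s t = 1 ∧ 0 ≤ max u v) := by
    rintro s t u v (⟨rfl, rfl⟩ | ⟨rfl, hu⟩) (⟨rfl, rfl⟩ | ⟨rfl, hv⟩)
    · simp
    · simp [hv, add_nonneg hm hv]
    · simp [hu, add_nonneg hm hu]
    · simp [hu, max_add_add_left]
  have hd : ∀ j, indicatorVec J j = 0 ∧ y j = 0 ∨ indicatorVec J j = 1 ∧ 0 ≤ y j := by
    intro j
    by_cases hj : j ∈ J
    · exact Or.inr ⟨by simp [indicatorVec, hj], hy j⟩
    · exact Or.inl ⟨by simp [indicatorVec, hj], hJ j hj⟩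
  obtain ⟨e1, d1⟩ := key _ _ _ _ (hd 0) (hd 1)
  obtain ⟨e2, d2⟩ := key _ _ _ _ (hd 2) (hd 3)
  obtain ⟨e3, -⟩ := key _ _ _ _ d1 d2
  simp only [tropical, e1, e2, e3, Fin.sum_univ_four]
  ring

/-- A function that is linear along chains of indicator vectors is nonpositive on the nonnegative
orthant if it is nonpositive at indicator vectors. The smallest positive coordinate of `x`, times
the indicator vector of its support, is split off repeatedly. -/
lemma nonpos_of_layers (F : (Fin 4 → ℝ) → ℝ) (h0 : F 0 = 0)
    (hF : ∀ J : Finset (Fin 4), ∀ m : ℝ, 0 ≤ m → ∀ y : Fin 4 → ℝ, (∀ j, 0 ≤ y j) →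
      (∀ j ∉ J, y j = 0) → F (fun j => m * indicatorVec J j + y j) = m * F (indicatorVec J) + F y)
    (hJ : ∀ J : Finset (Fin 4), J.Nonempty → F (indicatorVec J) ≤ 0)
    (x : Fin 4 → ℝ) (hx : ∀ j, 0 ≤ x j) : F x ≤ 0 := by
  induction hn : (univ.filter fun j => x j ≠ 0).card using Nat.strong_induction_on
    generalizing x with
  | _ n ih =>
    set S := univ.filter fun j => x j ≠ 0 with hS
    rcases S.eq_empty_or_nonempty with he | hne
    · have : x = 0 := by
        funext j
        by_contra hj
        have : j ∈ S := by simpa [hS] using hj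
        simp [he] at this
      rw [this, h0]
    · obtain ⟨k, hk, hmin⟩ := exists_min_image S x hne
      set y : Fin 4 → ℝ := fun j => x j - x k * indicatorVec S j with hy
      have hoff : ∀ j ∉ S, x j = 0 := fun j hj => by simpa [hS] using hj
      have hy0 : ∀ j, 0 ≤ y j := by
        intro j
        by_cases hj : j ∈ S
        · simpa [hy, indicatorVec, hj] using hmin j hj
        · simp [hy, indicatorVec, hj, hoff j hj]
      have hyS : ∀ j ∉ S, y j = 0 := fun j hj => by simp [hy, indicatorVec, hj, hoff j hj]
      have hlt : (univ.filter fun j => y j ≠ 0).card < n := by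
        rw [← hn]
        refine card_lt_card ⟨fun j hj => ?_, fun hsub => ?_⟩
        · by_contra hjS
          exact (mem_filter.1 hj).2 (hyS j hjS)
        · exact (mem_filter.1 (hsub hk)).2 (by simp [hy, indicatorVec, hk])
      have hdec : x = fun j => x k * indicatorVec S j + y j := by
        funext j
        simp [hy]
      rw [hdec, hF S _ (hx k) y hy0 hyS]
      have := ih _ hlt y hy0 rfl
      nlinarith [mul_nonneg (hx k) (neg_nonneg.2 (hJ S hne))]

lemma tropical_indicatorVec (a : Fin 4 → ℝ) (p q b : ℝ) {J : Finset (Fin 4)} (hJ : J.Nonempty) :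
    tropical a p q b (indicatorVec J) =
      ∑ j ∈ J, a j + (if (0 : Fin 4) ∈ J ∨ (1 : Fin 4) ∈ J then p else 0) +
        (if (2 : Fin 4) ∈ J ∨ (3 : Fin 4) ∈ J then q else 0) - b := by
  have hs : ∑ j, a j * indicatorVec J j = ∑ j ∈ J, a j := by
    simp [indicatorVec, mul_ite]
  have hm : ∀ k l : Fin 4, max (indicatorVec J k) (indicatorVec J l) =
      if k ∈ J ∨ l ∈ J then 1 else 0 := by
    intro k l
    by_cases hk : k ∈ J <;> by_cases hl : l ∈ J <;> simp [indicatorVec, hk, hl]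
  have hall : ((0 : Fin 4) ∈ J ∨ (1 : Fin 4) ∈ J) ∨ ((2 : Fin 4) ∈ J ∨ (3 : Fin 4) ∈ J) := by
    obtain ⟨j, hj⟩ := hJ
    fin_cases j <;> simp_all
  simp only [tropical, hs, hm]
  rcases hall with h | h
  · rw [if_pos h, if_pos h]
    split_ifs <;> simp
  · rw [if_pos h, if_pos h]
    split_ifs <;> simp

/-! ### Sufficiency -/

lemma summable_prod_rpow {ε : ℝ} (hε : 0 < ε) :
    Summable fun i : Fin 4 → ℕ+ => ∏ j, ((i j : ℕ) : ℝ) ^ (-(1 + ε)) := by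
  have hs : Summable fun n : ℕ+ => ((n : ℕ) : ℝ) ^ (-(1 + ε)) :=
    (Real.summable_nat_rpow.2 (by linarith)).comp_injective PNat.coe_injective
  have hnn : ∀ n : ℕ+, 0 ≤ ((n : ℕ) : ℝ) ^ (-(1 + ε)) := fun n => by positivity
  refine summable_of_sum_le (c := ∏ _j : Fin 4, ∑' n : ℕ+, ((n : ℕ) : ℝ) ^ (-(1 + ε)))
    (fun i => prod_nonneg fun j _ => hnn (i j)) fun u => ?_
  calc ∑ i ∈ u, ∏ j, ((i j : ℕ) : ℝ) ^ (-(1 + ε))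
      ≤ ∑ i ∈ Fintype.piFinset (fun j => u.image fun i : Fin 4 → ℕ+ => i j),
          ∏ j, ((i j : ℕ) : ℝ) ^ (-(1 + ε)) := by
        refine sum_le_sum_of_subset_of_nonneg (fun i hi => ?_)
          fun i _ _ => prod_nonneg fun j _ => hnn (i j)
        exact Fintype.mem_piFinset.2 fun j => mem_image_of_mem (fun i => i j) hi
    _ = ∏ j, ∑ n ∈ u.image (fun i : Fin 4 → ℕ+ => i j), ((n : ℕ) : ℝ) ^ (-(1 + ε)) :=
        (prod_univ_sum _ fun _ (n : ℕ+) => ((n : ℕ) : ℝ) ^ (-(1 + ε))).symm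
    _ ≤ _ := prod_le_prod (fun j _ => sum_nonneg fun n _ => hnn n)
        fun j _ => hs.sum_le_tsum _ fun n _ => hnn n

lemma summable_exp_logTerm (a : Fin 4 → ℝ) (p q b : ℝ)
    (h : ∀ J : Finset (Fin 4), J.Nonempty →
      (J.card : ℝ) + tropical a p q b (indicatorVec J) < 0) :
    Summable fun i => Real.exp (logTerm a p q b i) := by
  -- The finitely many strict inequalities leave room for a common `ε > 0`.
  have hev : ∀ᶠ ε in nhdsWithin (0 : ℝ) (Set.Ioi 0), ∀ J : Finset (Fin 4), J.Nonempty →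
      (1 + ε) * J.card + tropical a p q b (indicatorVec J) < 0 := by
    refine Filter.eventually_all.2 fun J => ?_
    by_cases hJ : J.Nonempty
    · have hc : Continuous fun ε : ℝ => (1 + ε) * J.card + tropical a p q b (indicatorVec J) := by
        fun_prop
      have := (hc.tendsto 0).eventually_lt_const (u := 0) (by simpa using h J hJ)
      filter_upwards [nhdsWithin_le_nhds this] with ε hε _ using hε
    · simp [hJ]
  obtain ⟨ε, hεJ, hε⟩ := (hev.and self_mem_nhdsWithin).exists
  have hε : 0 < ε := hε
  obtain ⟨C, hC⟩ := exists_abs_logTerm_sub_tropical_le a p q b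
  have hsplit : ∀ x, tropical (fun j => a j + (1 + ε)) p q b x =
      (1 + ε) * ∑ j, x j + tropical a p q b x := by
    intro x
    simp only [tropical, add_mul, sum_add_distrib, mul_sum]
    ring
  have hneg : ∀ x : Fin 4 → ℝ, (∀ j, 0 ≤ x j) →
      (1 + ε) * ∑ j, x j + tropical a p q b x ≤ 0 := by
    intro x hx
    rw [← hsplit]
    refine nonpos_of_layers (tropical (fun j => a j + (1 + ε)) p q b) (by simp [tropical])
      (fun J m hm y hy hyJ => tropical_layer _ p q b J hm hy hyJ) (fun J hJ => ?_) x hx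
    have hcard : ∑ j, indicatorVec J j = J.card := by simp [indicatorVec]
    rw [hsplit, hcard]
    exact (hεJ J hJ).le
  refine Summable.of_nonneg_of_le (fun i => (Real.exp_pos _).le) (fun i => ?_)
    ((summable_prod_rpow hε).mul_left (Real.exp C))
  have hprod : ∏ j, ((i j : ℕ) : ℝ) ^ (-(1 + ε)) =
      Real.exp (-((1 + ε) * ∑ j, Real.log (i j : ℕ))) := by
    rw [mul_sum, ← sum_neg_distrib, Real.exp_sum]
    refine prod_congr rfl fun j _ => ?_
    rw [Real.rpow_def_of_pos (cast_pnat_pos (i j))]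
    congr 1
    ring
  rw [hprod, ← Real.exp_add, Real.exp_le_exp]
  have h1 := (abs_le.1 (hC i)).2
  have h2 := hneg (fun j => Real.log (i j : ℕ)) fun j => Real.log_natCast_nonneg _
  linarith

/-! ### Necessity -/

/-- The indices whose coordinates lie in `[N, 2N)` for `j ∈ J` and are `1` for `j ∉ J`. -/
def block (J : Finset (Fin 4)) (N : ℕ+) : Finset (Fin 4 → ℕ+) :=
  Fintype.piFinset fun j => if j ∈ J then Ico N (N + N) else {1}

lemma card_block (J : Finset (Fin 4)) (N : ℕ+) : (block J N).card = (N : ℕ) ^ J.card := by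
  have : ∀ j, (if j ∈ J then Ico N (N + N) else {1} : Finset ℕ+).card =
      if j ∈ J then (N : ℕ) else 1 := by
    intro j
    split_ifs <;> simp [PNat.card_Ico]
  rw [block, Fintype.card_piFinset]
  simp only [this]
  simp

/-- On a block the vector of logarithms is within `log 2` of `log N • 1_J`. -/
lemma abs_log_sub_of_mem_block {J : Finset (Fin 4)} {N : ℕ+} {i : Fin 4 → ℕ+}
    (hi : i ∈ block J N) (j : Fin 4) :
    |Real.log (i j : ℕ) - Real.log (N : ℕ) * indicatorVec J j| ≤ Real.log 2 := by
  have hl2 := Real.log_nonneg (show (1 : ℝ) ≤ 2 by norm_num)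
  have hj := Fintype.mem_piFinset.1 hi j
  by_cases hJ : j ∈ J
  · rw [if_pos hJ, mem_Ico] at hj
    have hN := cast_pnat_pos N
    have h1 : ((N : ℕ) : ℝ) ≤ (i j : ℕ) := by exact_mod_cast hj.1
    have h2 : ((i j : ℕ) : ℝ) ≤ 2 * (N : ℕ) := by
      have : ((i j : ℕ) : ℝ) ≤ (N : ℕ) + (N : ℕ) := by exact_mod_cast hj.2.le
      linarith
    have h3 := Real.log_le_log hN h1
    have h4 := Real.log_le_log (cast_pnat_pos _) h2
    rw [Real.log_mul (by norm_num) hN.ne'] at h4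
    simp only [indicatorVec, hJ, if_true, mul_one]
    rw [abs_le]
    constructor <;> linarith
  · rw [if_neg hJ, mem_singleton] at hj
    simpa [indicatorVec, hJ, hj] using hl2

lemma neg_of_summable_exp_logTerm (a : Fin 4 → ℝ) (p q b : ℝ)
    (hs : Summable fun i => Real.exp (logTerm a p q b i))
    {J : Finset (Fin 4)} (hJ : J.Nonempty) :
    (J.card : ℝ) + tropical a p q b (indicatorVec J) < 0 := by
  by_contra! hcon
  obtain ⟨C, hC⟩ := exists_abs_logTerm_sub_tropical_le a p q b
  obtain ⟨K, hK⟩ := exists_tropical_lipschitz a p q b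
  -- `D` collects the error of the approximation and that of replacing `log (i j)` by
  -- `log N * 1_J j` on a block.
  set D := C + K * Real.log 2
  have hlow : ∀ N : ℕ+, Real.exp (-D) ≤ ∑ i ∈ block J N, Real.exp (logTerm a p q b i) := by
    intro N
    set L := Real.log (N : ℕ) with hL
    have hL0 : 0 ≤ L := Real.log_natCast_nonneg _
    have hhom : tropical a p q b (fun j => L * indicatorVec J j) =
        L * tropical a p q b (indicatorVec J) := by
      have := tropical_layer a p q b J hL0 (y := 0) (fun _ => le_rfl) (fun _ _ => rfl)
      simpa [tropical] using this
    have hterm : ∀ i ∈ block J N, Real.exp (L * tropical a p q b (indicatorVec J) - D) ≤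
        Real.exp (logTerm a p q b i) := by
      intro i hi
      have h1 := (abs_le.1 (hC i)).1
      have h2 := (abs_le.1 (hK _ _ _ (abs_log_sub_of_mem_block hi))).1
      rw [hhom] at h2
      rw [Real.exp_le_exp]
      simp only [D]
      linarith
    have hN : ((N : ℕ) : ℝ) ^ J.card = Real.exp (L * J.card) := by
      rw [hL, ← Real.rpow_natCast, Real.rpow_def_of_pos (cast_pnat_pos N)]
    have hsum := card_nsmul_le_sum _ _ _ hterm
    rw [card_block, nsmul_eq_mul, Nat.cast_pow, hN, ← Real.exp_add] at hsum
    refine le_trans (Real.exp_le_exp.2 ?_) hsum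
    nlinarith [mul_nonneg hL0 hcon]
  obtain ⟨s, hsv⟩ := summable_iff_vanishing_norm.1 hs _ (Real.exp_pos (-D))
  obtain ⟨k, hk⟩ := hJ
  -- `M` bounds the `k`-th coordinate on `s`, so that `block J (M + 1)` avoids `s`.
  obtain ⟨M, hM⟩ := (s.image fun i => i k).bddAbove
  have hdisj : Disjoint (block J (M + 1)) s := by
    refine disjoint_left.2 fun i hi his => ?_
    have h1 : i k ≤ M := hM (by exact_mod_cast mem_image_of_mem (fun i => i k) his)
    have h2 := Fintype.mem_piFinset.1 hi k
    rw [if_pos hk, mem_Ico] at h2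
    exact absurd (h2.1.trans h1) (not_le.2 (PNat.lt_add_right M 1))
  have hlt := hsv _ hdisj
  rw [Real.norm_eq_abs] at hlt
  exact absurd ((hlow (M + 1)).trans (le_abs_self _)) (not_le.2 hlt)


/-- Convergence criterion for
`∑_{i ∈ ℕ₊⁴} i₁^{a₁} i₂^{a₂} i₃^{a₃} i₄^{a₄} (i₁+i₂)^{a₁₂} (i₃+i₄)^{a₃₄}
/ (i₁+i₂+i₃+i₄)^b`, assuming `a₁ + a₁₂ > -1`. -/
theorem zeta_series_four_vars_two_pairs_iff (a₁ a₂ a₃ a₄ a₁₂ a₃₄ b : ℝ)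
    (h : -1 < a₁ + a₁₂) :
    Summable (fun i : Fin 4 → ℕ+ =>
        ((i 0 : ℕ) : ℝ) ^ a₁ * ((i 1 : ℕ) : ℝ) ^ a₂ * ((i 2 : ℕ) : ℝ) ^ a₃ *
          ((i 3 : ℕ) : ℝ) ^ a₄ *
          (((i 0 : ℕ) : ℝ) + ((i 1 : ℕ) : ℝ)) ^ a₁₂ *
          (((i 2 : ℕ) : ℝ) + ((i 3 : ℕ) : ℝ)) ^ a₃₄ /
          (((i 0 : ℕ) : ℝ) + ((i 1 : ℕ) : ℝ) + ((i 2 : ℕ) : ℝ) + ((i 3 : ℕ) : ℝ)) ^ b) ↔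
      ∀ J : Finset (Fin 4), J.Nonempty →
        (J.card : ℝ) + ∑ j ∈ J, ![a₁, a₂, a₃, a₄] j +
          (if (0 : Fin 4) ∈ J ∨ (1 : Fin 4) ∈ J then a₁₂ else 0) +
          (if (2 : Fin 4) ∈ J ∨ (3 : Fin 4) ∈ J then a₃₄ else 0) < b := by
  simp only [term_eq_exp_s11]
  have hcond : ∀ J : Finset (Fin 4), J.Nonempty →
      ((J.card : ℝ) + tropical ![a₁, a₂, a₃, a₄] a₁₂ a₃₄ b (indicatorVec J) < 0 ↔
      (J.card : ℝ) + ∑ j ∈ J, ![a₁, a₂, a₃, a₄] j +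
          (if (0 : Fin 4) ∈ J ∨ (1 : Fin 4) ∈ J then a₁₂ else 0) +
          (if (2 : Fin 4) ∈ J ∨ (3 : Fin 4) ∈ J then a₃₄ else 0) < b) := by
    intro J hJ
    rw [tropical_indicatorVec _ _ _ _ hJ]
    constructor <;> intro h' <;> linarith
  constructor
  · intro hs J hJ
    exact (hcond J hJ).1 (neg_of_summable_exp_logTerm _ _ _ _ hs hJ)
  · intro hJ
    exact summable_exp_logTerm _ _ _ _ fun J hne => (hcond J hne).2 (hJ J hne)
end

section
/- For a multi-index i ∈ ℕ^m, let e_1 denote the multi-index (1, 0, …, 0) and define λ(i) = (ω₁(i)/ω₁(i − e_1)) − ω₁(i + e_1)/ω₁(i) when i_1 ≥ 1, and λ(i) = −ω₁(i + e_1)/ω₁(i) when i_1 = 0. Then for every real p > 0, the series ∑_{i ∈ ℕ^m} |λ(i)|^p converges if and only if either m = 1 and p > 1/2, or m > 1 and p > max{ m, p_1(m−1) }. -/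
/-!
Write `a = 1 / p₀` (coordinate `0` is the distinguished one), `t = (n + 1) a` for `n = i₀`, and
`u = 1 + ∑_{j ≥ 1} (i_j + 1) / p_j`. Along the distinguished coordinate `ω₁` is a constant
multiple of `Γ(t) / Γ(t + u)`, so with
`F(x) = (Γ(x + a) / Γ(x)) / (Γ(x + u + a) / Γ(x + u))`
we have `-λ = F(t) - F(t - a)` for `n ≥ 1` and `-λ = F(a)` for `n = 0`.

**Size of the eigenvalues.** Log-convexity of `Γ` gives `F(x) ≍ (x / (x + u))^a` on `x ≥ a`, and
`log F → 0` at infinity (`logF_le`, `le_logF`, `tendsto_logF`). The second difference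
`D(x) = log F(x) - log F(x - a)` tends to `0`, and by `Γ(x + 1) = x Γ(x)` the difference
`D(x) - D(x + 1)` is elementary and comparable with the same difference of
`1 / x - 1 / (x + u)`. Telescoping gives `D(x) ≍ 1 / x - 1 / (x + u)`
(`logF_diff_lower`, `logF_diff_upper`). With `N = n + 1` and `k = 1 + ∑_{j ≥ 1} i_j` it follows that
`|λ(i)| ≍ (N / (N + k))^a · k / (N (N + k))` (`abs_lambdaOne_comparable`).

**Summability of the model.** Let `d = m - 1`. For `d = 0` the model is `≍ N⁻²`. Let `d ≥ 1`.
Splitting the power of `N + k` between `N` and `k` bounds the `q`-th power of the model by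
`N^(q(a-1)-θ) k^(-(qa-θ))`, which is summable when `q(a-1) + 1 < θ < qa - d`; a suitable `θ ≥ 0`
exists exactly when `q > d + 1` and `qa > d`. Both conditions are necessary: the slice `n = 0`
is `≍ k^(-qa)` on `ℕ^d`, and on a region where `N` and `k` are comparable (reached by the
injection `diagMap`) the term is `≍ N^(-q)` on `ℕ^(d+1)`. Both cases reduce to: if
`(1 + |i|)^(-α)` is summable over `ℕ^d` with `d ≥ 1`, then `α > d`.
-/

/-- `ω₁(i)`: the squared `L²` norm of the monomial `z^i` on the egg domain
`Ω₁ = {z ∈ ℂ^m : ∑ |z_j|^{2 p_j} < 1}`. -/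
noncomputable def omegaOne (m : ℕ) (p : Fin m → ℝ) (i : Fin m → ℕ) : ℝ :=
  (Real.pi ^ m / ∏ j, p j) *
    ((∏ j, Real.Gamma (((i j : ℝ) + 1) / p j)) /
      Real.Gamma (∑ j, ((i j : ℝ) + 1) / p j)) /
    (∑ j, ((i j : ℝ) + 1) / p j)

/-- `λ(i)`: the eigenvalue of the self-commutator `[M_{z₁}, M_{z₁}*]` at the
normalized monomial `z^i/√ω₁(i)`, where `x` is the distinguished coordinate. -/
noncomputable def lambdaOne (m : ℕ) (p : Fin m → ℝ) (x : Fin m) (i : Fin m → ℕ) : ℝ :=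
  if i x = 0 then
    -(omegaOne m p (Function.update i x (i x + 1)) / omegaOne m p i)
  else
    omegaOne m p i / omegaOne m p (Function.update i x (i x - 1))
      - omegaOne m p (Function.update i x (i x + 1)) / omegaOne m p i

/-! ### Gamma quotients -/

/-- The logarithm of `(Γ(x + a) / Γ(x)) / (Γ(x + u + a) / Γ(x + u))`, whose values at multiples
of `a = 1 / p₀` are the logarithms of the consecutive quotients `ω₁(i + e₁) / ω₁(i)`. -/
noncomputable def logF (a u x : ℝ) : ℝ :=
  (Real.log (Real.Gamma (x + a)) - Real.log (Real.Gamma x)) -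
    (Real.log (Real.Gamma (x + u + a)) - Real.log (Real.Gamma (x + u)))

lemma log_Gamma_add_one {x : ℝ} (hx : 0 < x) :
    Real.log (Real.Gamma (x + 1)) = Real.log (Real.Gamma x) + Real.log x := by
  rw [Real.Gamma_add_one hx.ne', Real.log_mul hx.ne' (Real.Gamma_pos_of_pos hx).ne', add_comm]

/-- The secant slope of `log Γ` over `[x, x + a]` is at most that over `[x + a, x + a + 1]`,
which is `log (x + a)`. -/
lemma log_Gamma_diff_le {a x : ℝ} (ha : 0 < a) (hx : 0 < x) :
    Real.log (Real.Gamma (x + a)) - Real.log (Real.Gamma x) ≤ a * Real.log (x + a) := by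
  have h := Real.convexOn_log_Gamma.slope_mono_adjacent (x := x) (y := x + a) (z := x + a + 1)
    hx (by simp only [Set.mem_Ioi]; linarith) (by linarith) (by linarith)
  simp only [Function.comp_apply, log_Gamma_add_one (show 0 < x + a by linarith)] at h
  rw [div_le_div_iff₀ (by linarith) (by linarith)] at h
  linarith

/-- The secant slope of `log Γ` over `[x + 1, x + 1 + a]` is at least that over `[x, x + 1]`,
which is `log x`. -/
lemma le_log_Gamma_diff {a x : ℝ} (ha : 0 < a) (hx : 0 < x) :
    a * Real.log x ≤ Real.log (Real.Gamma (x + 1 + a)) - Real.log (Real.Gamma (x + 1)) := by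
  have h := Real.convexOn_log_Gamma.slope_mono_adjacent (x := x) (y := x + 1) (z := x + 1 + a)
    hx (by simp only [Set.mem_Ioi]; linarith) (by linarith) (by linarith)
  simp only [Function.comp_apply, log_Gamma_add_one hx] at h
  rw [div_le_div_iff₀ (by linarith) (by linarith)] at h
  rw [log_Gamma_add_one hx]
  linarith

lemma log_Gamma_diff_upper {a x : ℝ} (ha : 0 < a) (hx : a ≤ x) :
    Real.log (Real.Gamma (x + a)) - Real.log (Real.Gamma x)
      ≤ a * Real.log x + a * Real.log 2 := by
  have hx0 : 0 < x := by linarith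
  have h := log_Gamma_diff_le ha hx0
  have h2 : Real.log (x + a) ≤ Real.log 2 + Real.log x := by
    rw [← Real.log_mul (by norm_num) hx0.ne']
    exact Real.log_le_log (by linarith) (by linarith)
  nlinarith

lemma log_Gamma_diff_lower {a x : ℝ} (ha : 0 < a) (hx : a ≤ x) :
    a * Real.log x - Real.log 2
      ≤ Real.log (Real.Gamma (x + a)) - Real.log (Real.Gamma x) := by
  have hx0 : 0 < x := by linarith
  have h := le_log_Gamma_diff ha hx0
  have h2 : Real.log (x + a) ≤ Real.log 2 + Real.log x := by
    rw [← Real.log_mul (by norm_num) hx0.ne']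
    exact Real.log_le_log (by linarith) (by linarith)
  rw [log_Gamma_add_one hx0, add_right_comm, log_Gamma_add_one (by linarith)] at h
  linarith

lemma logF_le {a u x : ℝ} (ha : 0 < a) (hu : 0 < u) (hx : a ≤ x) :
    logF a u x ≤ a * (Real.log x - Real.log (x + u)) + (a + 1) * Real.log 2 := by
  have h1 := log_Gamma_diff_upper ha hx
  have h2 := log_Gamma_diff_lower ha (show a ≤ x + u by linarith)
  unfold logF; linarith

lemma le_logF {a u x : ℝ} (ha : 0 < a) (hu : 0 < u) (hx : a ≤ x) :
    a * (Real.log x - Real.log (x + u)) - (a + 1) * Real.log 2 ≤ logF a u x := by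
  have h1 := log_Gamma_diff_lower ha hx
  have h2 := log_Gamma_diff_upper ha (show a ≤ x + u by linarith)
  unfold logF; linarith

lemma tendsto_log_Gamma_diff {a : ℝ} (ha : 0 < a) :
    Filter.Tendsto (fun x : ℝ => Real.log (Real.Gamma (x + a)) - Real.log (Real.Gamma x)
      - a * Real.log x) Filter.atTop (nhds 0) := by
  have h1 : Filter.Tendsto (fun x : ℝ => a * (Real.log (x + a) - Real.log x))
      Filter.atTop (nhds 0) := by
    simpa using (Real.tendsto_log_comp_add_sub_log a).const_mul a
  have h2 : Filter.Tendsto (fun x : ℝ => a * (Real.log (x + (-1)) - Real.log x))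
      Filter.atTop (nhds 0) := by
    simpa using (Real.tendsto_log_comp_add_sub_log (-1)).const_mul a
  refine tendsto_of_tendsto_of_tendsto_of_le_of_le' h2 h1 ?_ ?_
  · filter_upwards [Filter.eventually_gt_atTop 1] with x hx
    have := le_log_Gamma_diff ha (show 0 < x + (-1) by linarith)
    rw [show x + (-1) + 1 = x by ring] at this
    linarith
  · filter_upwards [Filter.eventually_gt_atTop 1] with x hx
    have := log_Gamma_diff_le ha (show 0 < x by linarith)
    linarith

lemma tendsto_logF {a : ℝ} (ha : 0 < a) (u : ℝ) :
    Filter.Tendsto (logF a u) Filter.atTop (nhds 0) := by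
  have h1 := tendsto_log_Gamma_diff ha
  have h2 := h1.comp (Filter.tendsto_atTop_add_const_right Filter.atTop u Filter.tendsto_id)
  have h3 := (Real.tendsto_log_comp_add_sub_log u).const_mul a
  have h4 := (h1.sub h2).sub h3
  simp only [mul_zero, sub_zero] at h4
  refine h4.congr fun x => ?_
  simp only [Function.comp_apply, id, logF]
  ring

lemma logF_add_one {a u x : ℝ} (ha : 0 < a) (hu : 0 < u) (hx : 0 < x) :
    logF a u (x + 1) = logF a u x + (Real.log (x + a) - Real.log x)
      - (Real.log (x + u + a) - Real.log (x + u)) := by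
  unfold logF
  rw [add_right_comm x 1 a, add_right_comm x 1 u, add_right_comm (x + u) 1 a,
    log_Gamma_add_one, log_Gamma_add_one, log_Gamma_add_one, log_Gamma_add_one] <;> linarith

/-- For `D(x) = logF a u x - logF a u (x - a)`, the functional equation of `Γ` turns
`D(x) - D(x + 1)` into an elementary function. -/
lemma logF_diff_step {a u x : ℝ} (ha : 0 < a) (hu : 0 < u) (hx : 2 * a ≤ x) :
    (logF a u x - logF a u (x - a)) - (logF a u (x + 1) - logF a u (x + 1 - a)) =
      Real.log ((1 - a ^ 2 / (x + u) ^ 2) / (1 - a ^ 2 / x ^ 2)) := by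
  have hx0 : 0 < x := by linarith
  have e : ∀ y : ℝ, 2 * a ≤ y → Real.log (1 - a ^ 2 / y ^ 2) =
      Real.log (y + a) + Real.log (y - a) - 2 * Real.log y := by
    intro y hy
    have hy0 : 0 < y := by linarith
    have : 1 - a ^ 2 / y ^ 2 = (y + a) * (y - a) / y ^ 2 := by field_simp; ring
    rw [this, Real.log_div (mul_pos (by linarith) (by linarith)).ne' (by positivity),
      Real.log_mul (by linarith) (by linarith), Real.log_pow]
    norm_num
  have pos : ∀ y : ℝ, 2 * a ≤ y → 1 - a ^ 2 / y ^ 2 ≠ 0 := by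
    intro y hy
    have hy0 : 0 < y := by linarith
    have : 1 - a ^ 2 / y ^ 2 = (y + a) * (y - a) / y ^ 2 := by field_simp; ring
    rw [this]
    exact (div_pos (mul_pos (by linarith) (by linarith)) (by positivity)).ne'
  rw [Real.log_div (pos _ (by linarith)) (pos _ hx), e _ hx, e _ (by linarith),
    show x + 1 - a = (x - a) + 1 by ring, logF_add_one ha hu hx0,
    logF_add_one ha hu (show 0 < x - a by linarith)]
  rw [show x - a + a = x by ring, show x - a + u + a = x + u by ring,
    show x - a + u = x + u - a by ring]
  ring

lemma le_of_step_of_tendsto {h : ℕ → ℝ} (hs : ∀ k, h k ≤ h (k + 1))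
    (hl : Filter.Tendsto h Filter.atTop (nhds 0)) : h 0 ≤ 0 :=
  (monotone_nat_of_le_succ hs).ge_of_tendsto hl 0

lemma tendsto_model (u x : ℝ) :
    Filter.Tendsto (fun k : ℕ => 1 / (x + k) - 1 / (x + k + u)) Filter.atTop (nhds 0) := by
  have h1 : Filter.Tendsto (fun k : ℕ => x + (k : ℝ)) Filter.atTop Filter.atTop :=
    Filter.tendsto_atTop_add_const_left _ _ tendsto_natCast_atTop_atTop
  have h2 := Filter.tendsto_atTop_add_const_right _ u h1
  simpa using h1.inv_tendsto_atTop.sub h2.inv_tendsto_atTop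

lemma tendsto_logF_diff {a : ℝ} (ha : 0 < a) (u x : ℝ) :
    Filter.Tendsto (fun k : ℕ => logF a u (x + k) - logF a u (x + k - a))
      Filter.atTop (nhds 0) := by
  have h1 : Filter.Tendsto (fun k : ℕ => x + (k : ℝ)) Filter.atTop Filter.atTop :=
    Filter.tendsto_atTop_add_const_left _ _ tendsto_natCast_atTop_atTop
  have h2 := Filter.tendsto_atTop_add_const_right _ (-a) h1
  simpa [sub_eq_add_neg] using ((tendsto_logF ha u).comp h1).sub ((tendsto_logF ha u).comp h2)

lemma logF_step_lower {a u x : ℝ} (ha : 0 < a) (hu : 0 < u) (hx : 2 * a ≤ x) :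
    a ^ 2 * ((1 / x - 1 / (x + u)) - (1 / (x + 1) - 1 / (x + 1 + u))) ≤
      Real.log ((1 - a ^ 2 / (x + u) ^ 2) / (1 - a ^ 2 / x ^ 2)) := by
  have hx0 : 0 < x := by linarith
  have hA : 0 < 1 - a ^ 2 / x ^ 2 := by
    have : 1 - a ^ 2 / x ^ 2 = (x + a) * (x - a) / x ^ 2 := by field_simp; ring
    rw [this]; exact div_pos (mul_pos (by linarith) (by linarith)) (by positivity)
  have hAB : a ^ 2 / (x + u) ^ 2 ≤ a ^ 2 / x ^ 2 := by gcongr; linarith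
  have hB : 0 < 1 - a ^ 2 / (x + u) ^ 2 := by linarith
  have hB0 : 0 ≤ a ^ 2 / (x + u) ^ 2 := by positivity
  have h1 := Real.one_sub_inv_le_log_of_pos (div_pos hB hA)
  refine le_trans ?_ h1
  have h2 : a ^ 2 / x ^ 2 - a ^ 2 / (x + u) ^ 2 ≤
      1 - ((1 - a ^ 2 / (x + u) ^ 2) / (1 - a ^ 2 / x ^ 2))⁻¹ := by
    rw [inv_div, le_sub_comm, div_le_iff₀ hB]
    nlinarith
  refine le_trans ?_ h2
  have h3 : (a ^ 2 / x ^ 2 - a ^ 2 / (x + u) ^ 2) -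
      a ^ 2 * ((1 / x - 1 / (x + u)) - (1 / (x + 1) - 1 / (x + 1 + u))) =
      a ^ 2 * (1 / (x ^ 2 * (x + 1)) - 1 / ((x + u) ^ 2 * (x + 1 + u))) := by
    field_simp; ring
  have h4 : 1 / ((x + u) ^ 2 * (x + 1 + u)) ≤ 1 / (x ^ 2 * (x + 1)) := by
    have hxu : x ≤ x + u := by linarith
    have hxu1 : x + 1 ≤ x + 1 + u := by linarith
    exact one_div_le_one_div_of_le (by positivity)
      (mul_le_mul (pow_le_pow_left₀ hx0.le hxu 2) hxu1 (by positivity) (by positivity))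
  nlinarith [sq_nonneg a, mul_nonneg (sq_nonneg a) (sub_nonneg.2 h4)]

lemma logF_step_upper {a u x : ℝ} (ha : 0 < a) (hu : 0 < u) (hx : 2 * a ≤ x) :
    Real.log ((1 - a ^ 2 / (x + u) ^ 2) / (1 - a ^ 2 / x ^ 2)) ≤
      (2 * a + 1) ^ 2 / 3 * ((1 / x - 1 / (x + u)) - (1 / (x + 1) - 1 / (x + 1 + u))) := by
  have hx0 : 0 < x := by linarith
  have hA : 3 / 4 ≤ 1 - a ^ 2 / x ^ 2 := by
    have : a ^ 2 / x ^ 2 ≤ 1 / 4 := by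
      rw [div_le_div_iff₀ (by positivity) (by positivity)]; nlinarith
    linarith
  have hAB : a ^ 2 / (x + u) ^ 2 ≤ a ^ 2 / x ^ 2 := by gcongr; linarith
  have hB : 0 < 1 - a ^ 2 / (x + u) ^ 2 := by linarith
  have h1 := Real.log_le_sub_one_of_pos (div_pos hB (show 0 < 1 - a ^ 2 / x ^ 2 by linarith))
  refine h1.trans ?_
  have h2 : (1 - a ^ 2 / (x + u) ^ 2) / (1 - a ^ 2 / x ^ 2) - 1 ≤
      4 / 3 * (a ^ 2 / x ^ 2 - a ^ 2 / (x + u) ^ 2) := by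
    rw [sub_le_iff_le_add, div_le_iff₀ (by linarith)]
    nlinarith [mul_nonneg (sub_nonneg.2 hAB) (sub_nonneg.2 hA)]
  refine h2.trans ?_
  have e1 : 4 / 3 * (a ^ 2 / x ^ 2 - a ^ 2 / (x + u) ^ 2) =
      4 * a ^ 2 * (u * (2 * x + u)) / (3 * (x ^ 2 * (x + u) ^ 2)) := by
    field_simp; ring
  have e2 : (2 * a + 1) ^ 2 / 3 * ((1 / x - 1 / (x + u)) - (1 / (x + 1) - 1 / (x + 1 + u))) =
      (2 * a + 1) ^ 2 * (u * (2 * x + u + 1)) / (3 * (x * (x + u) * ((x + 1) * (x + 1 + u)))) := by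
    field_simp; ring
  rw [e1, e2, div_le_div_iff₀ (by positivity) (by positivity)]
  have k1 : 2 * a * (x + 1) ≤ (2 * a + 1) * x := by nlinarith
  have k2 : 2 * a * (x + 1 + u) ≤ (2 * a + 1) * (x + u) := by nlinarith
  have k3 : 4 * a ^ 2 * ((x + 1) * (x + 1 + u)) ≤ (2 * a + 1) ^ 2 * (x * (x + u)) := by
    have := mul_le_mul k1 k2 (by positivity) (by positivity)
    nlinarith
  have k4 : u * (2 * x + u) ≤ u * (2 * x + u + 1) := by nlinarith
  have k5 := mul_le_mul k3 k4 (by positivity) (by positivity)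
  have k6 := mul_le_mul_of_nonneg_left k5 (show 0 ≤ 3 * (x * (x + u)) by positivity)
  linarith

/-- `a² (1 / x - 1 / (x + u)) - D(x)` increases along `x, x + 1, x + 2, …` and tends to `0`. -/
lemma logF_diff_lower {a u x : ℝ} (ha : 0 < a) (hu : 0 < u) (hx : 2 * a ≤ x) :
    a ^ 2 * (1 / x - 1 / (x + u)) ≤ logF a u x - logF a u (x - a) := by
  have key := le_of_step_of_tendsto
    (h := fun k : ℕ => a ^ 2 * (1 / (x + k) - 1 / (x + k + u)) -
      (logF a u (x + k) - logF a u (x + k - a))) ?_ ?_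
  · simp only [Nat.cast_zero, add_zero] at key; linarith
  · intro k
    have hk : 2 * a ≤ x + k := by have := Nat.cast_nonneg (α := ℝ) k; linarith
    have h1 := logF_diff_step ha hu hk
    have h2 := logF_step_lower ha hu hk
    push_cast
    rw [← add_assoc x (k : ℝ) 1]
    linarith
  · simpa using ((tendsto_model u x).const_mul (a ^ 2)).sub (tendsto_logF_diff ha u x)

lemma logF_diff_upper {a u x : ℝ} (ha : 0 < a) (hu : 0 < u) (hx : 2 * a ≤ x) :
    logF a u x - logF a u (x - a) ≤ (2 * a + 1) ^ 2 / 3 * (1 / x - 1 / (x + u)) := by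
  have key := le_of_step_of_tendsto
    (h := fun k : ℕ => (logF a u (x + k) - logF a u (x + k - a)) -
      (2 * a + 1) ^ 2 / 3 * (1 / (x + k) - 1 / (x + k + u))) ?_ ?_
  · simp only [Nat.cast_zero, add_zero] at key; linarith
  · intro k
    have hk : 2 * a ≤ x + k := by have := Nat.cast_nonneg (α := ℝ) k; linarith
    have h1 := logF_diff_step ha hu hk
    have h2 := logF_step_upper ha hu hk
    push_cast
    rw [← add_assoc x (k : ℝ) 1]
    linarith
  · simpa using (tendsto_logF_diff ha u x).sub ((tendsto_model u x).const_mul _)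

/-! ### Size of the eigenvalues -/

/-- The elementary function `(t / (t + u))^a · u / (t (t + u))` to which `|λ|` is comparable. -/
noncomputable def model (a t u : ℝ) : ℝ := (t / (t + u)) ^ a * (u / (t * (t + u)))

lemma model_pos {a t u : ℝ} (ht : 0 < t) (hu : 0 < u) : 0 < model a t u := by
  unfold model; positivity

lemma model_le_of_comparable {a lo hi N k t u : ℝ} (ha : 0 < a) (hlo : 0 < lo)
    (hN : 0 < N) (hk : 0 < k) (h1 : lo * N ≤ t) (h2 : t ≤ hi * N)
    (h3 : lo * k ≤ u) (h4 : u ≤ hi * k) :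
    model a t u ≤ ((hi / lo) ^ a * (hi / lo ^ 2)) * model a N k := by
  have ht : 0 < t := (mul_pos hlo hN).trans_le h1
  have hu : 0 < u := (mul_pos hlo hk).trans_le h3
  have hhi : 0 < hi := by
    by_contra h
    nlinarith
  have hs : lo * (N + k) ≤ t + u := by linarith
  have e1 : t / (t + u) ≤ (hi / lo) * (N / (N + k)) := by
    rw [div_mul_div_comm]
    gcongr
  have e2 : u / (t * (t + u)) ≤ (hi / lo ^ 2) * (k / (N * (N + k))) := by
    rw [div_mul_div_comm, show lo ^ 2 * (N * (N + k)) = (lo * N) * (lo * (N + k)) by ring]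
    gcongr
  unfold model
  calc (t / (t + u)) ^ a * (u / (t * (t + u)))
      ≤ ((hi / lo) * (N / (N + k))) ^ a * ((hi / lo ^ 2) * (k / (N * (N + k)))) := by gcongr
    _ = _ := by rw [Real.mul_rpow (by positivity) (by positivity)]; ring

lemma exp_logF_le {a u x : ℝ} (ha : 0 < a) (hu : 0 < u) (hx : a ≤ x) :
    Real.exp (logF a u x) ≤ 2 ^ (a + 1) * (x / (x + u)) ^ a := by
  have hx0 : 0 < x := by linarith
  have h := Real.exp_le_exp.2 (logF_le ha hu hx)
  rwa [Real.exp_add, ← Real.log_div hx0.ne' (by positivity), mul_comm a, mul_comm (a + 1),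
    ← Real.rpow_def_of_pos (by positivity), ← Real.rpow_def_of_pos (by norm_num), mul_comm] at h

lemma le_exp_logF {a u x : ℝ} (ha : 0 < a) (hu : 0 < u) (hx : a ≤ x) :
    (2 ^ (a + 1))⁻¹ * (x / (x + u)) ^ a ≤ Real.exp (logF a u x) := by
  have hx0 : 0 < x := by linarith
  have h := Real.exp_le_exp.2 (le_logF ha hu hx)
  rwa [sub_eq_add_neg, Real.exp_add, Real.exp_neg, ← Real.log_div hx0.ne' (by positivity),
    mul_comm a, mul_comm (a + 1),
    ← Real.rpow_def_of_pos (by positivity), ← Real.rpow_def_of_pos (by norm_num), mul_comm] at h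

/-- The absolute value of `λ` at an index with first entry `n`, for `a = 1 / p₀` and
`u = 1 + ∑_{j ≥ 1} (i_j + 1) / p_j`: the difference of two consecutive quotients of `ω₁`, or the
single first quotient when `n = 0`. -/
noncomputable def eigenAbs (a u : ℝ) (n : ℕ) : ℝ :=
  if n = 0 then Real.exp (logF a u a)
  else Real.exp (logF a u ((n + 1) * a)) - Real.exp (logF a u (n * a))

lemma eigenAbs_zero_bounds {a u : ℝ} (ha : 0 < a) (hu : 1 ≤ u) :
    ((2 ^ (a + 1))⁻¹ * a) * model a a u ≤ Real.exp (logF a u a) ∧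
      Real.exp (logF a u a) ≤ (2 ^ (a + 1) * (a * (1 + a))) * model a a u := by
  have h1 := exp_logF_le ha (show 0 < u by linarith) le_rfl
  have h2 := le_exp_logF ha (show 0 < u by linarith) le_rfl
  have hp : 0 < (a / (a + u)) ^ a := by positivity
  have hw1 : a * (u / (a * (a + u))) ≤ 1 := by
    rw [← mul_div_assoc, div_le_one (by positivity)]; nlinarith
  have hw2 : 1 ≤ (a * (1 + a)) * (u / (a * (a + u))) := by
    rw [← mul_div_assoc, le_div_iff₀ (by positivity)]; nlinarith [mul_pos ha ha]
  unfold model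
  constructor
  · calc _ = ((2 ^ (a + 1))⁻¹ * (a / (a + u)) ^ a) * (a * (u / (a * (a + u)))) := by ring
      _ ≤ ((2 ^ (a + 1))⁻¹ * (a / (a + u)) ^ a) * 1 := by gcongr
      _ ≤ _ := by linarith
  · calc _ ≤ (2 ^ (a + 1) * (a / (a + u)) ^ a) * 1 := by linarith
      _ ≤ (2 ^ (a + 1) * (a / (a + u)) ^ a) * ((a * (1 + a)) * (u / (a * (a + u)))) := by gcongr
      _ = _ := by ring

lemma exp_logF_sub_lower {a u x : ℝ} (ha : 0 < a) (hu : 0 < u) (hx : 2 * a ≤ x) :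
    ((2 ^ (a + 1))⁻¹ * (2 ^ a)⁻¹ * a ^ 2) * model a x u ≤
      Real.exp (logF a u x) - Real.exp (logF a u (x - a)) := by
  have hx0 : 0 < x := by linarith
  have h1 := le_exp_logF ha hu (show a ≤ x - a by linarith)
  have h2 := logF_diff_lower ha hu hx
  rw [show 1 / x - 1 / (x + u) = u / (x * (x + u)) by field_simp; ring] at h2
  have h3 := Real.add_one_le_exp (logF a u x - logF a u (x - a))
  have h4 : (2 ^ a)⁻¹ * (x / (x + u)) ^ a ≤ ((x - a) / (x - a + u)) ^ a := by
    rw [← Real.inv_rpow (by norm_num), ← Real.mul_rpow (by norm_num) (by positivity)]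
    apply Real.rpow_le_rpow (by positivity) _ ha.le
    rw [← div_eq_inv_mul, div_div, div_le_div_iff₀ (by positivity) (by linarith)]
    nlinarith
  have h5 : Real.exp (logF a u x) = Real.exp (logF a u (x - a)) *
      Real.exp (logF a u x - logF a u (x - a)) := by rw [← Real.exp_add]; ring_nf
  have hw : 0 ≤ a ^ 2 * (u / (x * (x + u))) := by positivity
  calc _ = ((2 ^ (a + 1))⁻¹ * ((2 ^ a)⁻¹ * (x / (x + u)) ^ a)) *
        (a ^ 2 * (u / (x * (x + u)))) := by unfold model; ring
    _ ≤ ((2 ^ (a + 1))⁻¹ * ((x - a) / (x - a + u)) ^ a) * (a ^ 2 * (u / (x * (x + u)))) := by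
      gcongr
    _ ≤ Real.exp (logF a u (x - a)) * (Real.exp (logF a u x - logF a u (x - a)) - 1) := by
      apply mul_le_mul h1 (by linarith) hw (Real.exp_nonneg _)
    _ = _ := by rw [h5]; ring

lemma exp_logF_sub_upper {a u x : ℝ} (ha : 0 < a) (hu : 0 < u) (hx : 2 * a ≤ x) :
    Real.exp (logF a u x) - Real.exp (logF a u (x - a)) ≤
      (2 ^ (a + 1) * ((2 * a + 1) ^ 2 / 3 * Real.exp ((2 * a + 1) ^ 2 / 3 * (1 / (2 * a)))))
        * model a x u := by
  have hx0 : 0 < x := by linarith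
  have h1 := exp_logF_le ha hu (show a ≤ x - a by linarith)
  have h2 := logF_diff_upper ha hu hx
  have h2' := logF_diff_lower ha hu hx
  rw [show 1 / x - 1 / (x + u) = u / (x * (x + u)) by field_simp; ring] at h2 h2'
  set D := logF a u x - logF a u (x - a) with hD
  have hw : u / (x * (x + u)) ≤ 1 / (2 * a) := by
    rw [div_le_div_iff₀ (by positivity) (by positivity)]; nlinarith
  have hw0 : 0 ≤ u / (x * (x + u)) := by positivity
  have hD0 : 0 ≤ D := le_trans (by positivity) h2'
  have h3 : Real.exp D - 1 ≤ D * Real.exp D := by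
    have := Real.add_one_le_exp (-D)
    rw [Real.exp_neg] at this
    have hp := Real.exp_pos D
    have := mul_le_mul_of_nonneg_right this hp.le
    rw [inv_mul_cancel₀ hp.ne'] at this
    linarith
  have h4 : ((x - a) / (x - a + u)) ^ a ≤ (x / (x + u)) ^ a := by
    apply Real.rpow_le_rpow (div_nonneg (by linarith) (by linarith)) _ ha.le
    rw [div_le_div_iff₀ (by linarith) (by positivity)]
    nlinarith
  have h5 : Real.exp (logF a u x) = Real.exp (logF a u (x - a)) * Real.exp D := by
    rw [← Real.exp_add, hD]; ring_nf
  have h6 : D * Real.exp D ≤ ((2 * a + 1) ^ 2 / 3 * (u / (x * (x + u)))) *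
      Real.exp ((2 * a + 1) ^ 2 / 3 * (1 / (2 * a))) := by
    apply mul_le_mul h2 _ (Real.exp_nonneg _) (by positivity)
    apply Real.exp_le_exp.2 (h2.trans _)
    gcongr
  calc _ = Real.exp (logF a u (x - a)) * (Real.exp D - 1) := by rw [h5]; ring
    _ ≤ (2 ^ (a + 1) * (x / (x + u)) ^ a) * (((2 * a + 1) ^ 2 / 3 * (u / (x * (x + u)))) *
      Real.exp ((2 * a + 1) ^ 2 / 3 * (1 / (2 * a)))) := by
      apply mul_le_mul (h1.trans (by gcongr)) (h3.trans h6) _ (by positivity)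
      linarith [Real.one_le_exp hD0]
    _ = _ := by unfold model; ring

lemma eigenAbs_bounds {a : ℝ} (ha : 0 < a) : ∃ c C : ℝ, 0 < c ∧ 0 < C ∧
    ∀ (u : ℝ), 1 ≤ u → ∀ n : ℕ,
      c * model a ((n + 1) * a) u ≤ eigenAbs a u n ∧
        eigenAbs a u n ≤ C * model a ((n + 1) * a) u := by
  refine ⟨min ((2 ^ (a + 1))⁻¹ * a) ((2 ^ (a + 1))⁻¹ * (2 ^ a)⁻¹ * a ^ 2),
    max (2 ^ (a + 1) * (a * (1 + a))) (2 ^ (a + 1) * ((2 * a + 1) ^ 2 / 3 *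
      Real.exp ((2 * a + 1) ^ 2 / 3 * (1 / (2 * a))))), by positivity, by positivity, ?_⟩
  intro u hu n
  have hm : 0 < model a ((n + 1) * a) u := model_pos (by positivity) (by linarith)
  rcases Nat.eq_zero_or_pos n with rfl | hn
  · have h := eigenAbs_zero_bounds ha hu
    simp only [eigenAbs, if_true, Nat.cast_zero, zero_add, one_mul] at hm ⊢
    exact ⟨(mul_le_mul_of_nonneg_right (min_le_left _ _) hm.le).trans h.1,
      h.2.trans (mul_le_mul_of_nonneg_right (le_max_left _ _) hm.le)⟩
  · have hn1 : (1 : ℝ) ≤ n := by exact_mod_cast hn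
    have hx : 2 * a ≤ (n + 1) * a := by nlinarith
    have h1 := exp_logF_sub_lower ha (show 0 < u by linarith) hx
    have h2 := exp_logF_sub_upper ha (show 0 < u by linarith) hx
    rw [show ((n : ℝ) + 1) * a - a = n * a by ring] at h1 h2
    simp only [eigenAbs, if_neg hn.ne']
    exact ⟨(mul_le_mul_of_nonneg_right (min_le_right _ _) hm.le).trans h1,
      h2.trans (mul_le_mul_of_nonneg_right (le_max_right _ _) hm.le)⟩

/-- The parameter `u = 1 + ∑_{j ≥ 1} (i_j + 1) / p_j` attached to the non-distinguished entries;
the summand `1` comes from `Γ(S) · S = Γ(S + 1)` in the denominator of `ω₁`. -/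
noncomputable def tailSum {d : ℕ} (p : Fin (d + 1) → ℝ) (i : Fin d → ℕ) : ℝ :=
  1 + ∑ j, ((i j : ℝ) + 1) / p j.succ

lemma one_le_tailSum {d : ℕ} {p : Fin (d + 1) → ℝ} (hp : ∀ j, 0 < p j) (i : Fin d → ℕ) :
    1 ≤ tailSum p i := by
  have : 0 ≤ ∑ j, ((i j : ℝ) + 1) / p j.succ :=
    Finset.sum_nonneg fun j _ => div_nonneg (by positivity) (hp _).le
  unfold tailSum; linarith

lemma omegaOne_cons {d : ℕ} {p : Fin (d + 1) → ℝ} (hp : ∀ j, 0 < p j) (i : Fin d → ℕ) :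
    ∃ K : ℝ, 0 < K ∧ ∀ n : ℕ, omegaOne (d + 1) p (Fin.cons n i) =
      K * (Real.Gamma (((n : ℝ) + 1) * (1 / p 0)) /
        Real.Gamma (((n : ℝ) + 1) * (1 / p 0) + tailSum p i)) := by
  refine ⟨(Real.pi ^ (d + 1) / ∏ j, p j) * ∏ j, Real.Gamma (((i j : ℝ) + 1) / p j.succ), ?_, ?_⟩
  · refine mul_pos (div_pos (by positivity) (Finset.prod_pos fun j _ => hp j))
      (Finset.prod_pos fun j _ => Real.Gamma_pos_of_pos (div_pos (by positivity) (hp _)))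
  · intro n
    have hS : 0 < ((n : ℝ) + 1) / p 0 + ∑ j : Fin d, ((i j : ℝ) + 1) / p j.succ :=
      add_pos_of_pos_of_nonneg (div_pos (by positivity) (hp 0))
        (Finset.sum_nonneg fun j _ => div_nonneg (by positivity) (hp _).le)
    have e : ((n : ℝ) + 1) * (1 / p 0) + tailSum p i =
        (((n : ℝ) + 1) / p 0 + ∑ j : Fin d, ((i j : ℝ) + 1) / p j.succ) + 1 := by
      unfold tailSum; ring
    rw [e, Real.Gamma_add_one hS.ne']
    unfold omegaOne
    rw [Fin.prod_univ_succ (fun j => Real.Gamma _), Fin.sum_univ_succ]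
    simp only [Fin.cons_zero, Fin.cons_succ]
    rw [mul_one_div, mul_div_assoc, div_div, mul_comm (Real.Gamma (_ + _))]
    ring

lemma Gamma_ratio_eq {a u x K : ℝ} (ha : 0 < a) (hu : 0 < u) (hx : 0 < x) (hK : 0 < K) :
    (K * (Real.Gamma (x + a) / Real.Gamma (x + a + u))) /
      (K * (Real.Gamma x / Real.Gamma (x + u))) = Real.exp (logF a u x) := by
  have h1 := Real.Gamma_pos_of_pos hx
  have h2 := Real.Gamma_pos_of_pos (show 0 < x + a by linarith)
  have h3 := Real.Gamma_pos_of_pos (show 0 < x + u by linarith)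
  have h4 := Real.Gamma_pos_of_pos (show 0 < x + u + a by linarith)
  unfold logF
  rw [← Real.log_div h2.ne' h1.ne', ← Real.log_div h4.ne' h3.ne',
    ← Real.log_div (div_pos h2 h1).ne' (div_pos h4 h3).ne', Real.exp_log (by positivity),
    add_right_comm x a u]
  field_simp

lemma abs_lambdaOne_cons {d : ℕ} {p : Fin (d + 1) → ℝ} (hp : ∀ j, 0 < p j) (n : ℕ)
    (i : Fin d → ℕ) (hpos : 0 ≤ eigenAbs (1 / p 0) (tailSum p i) n) :
    |lambdaOne (d + 1) p 0 (Fin.cons n i)| = eigenAbs (1 / p 0) (tailSum p i) n := by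
  obtain ⟨K, hK, hω⟩ := omegaOne_cons hp i
  have ha : 0 < 1 / p 0 := one_div_pos.2 (hp 0)
  have hu : 0 < tailSum p i := by linarith [one_le_tailSum hp i]
  have ratio : ∀ n : ℕ, omegaOne (d + 1) p (Fin.cons (n + 1) i) /
      omegaOne (d + 1) p (Fin.cons n i) =
        Real.exp (logF (1 / p 0) (tailSum p i) ((n + 1) * (1 / p 0))) := by
    intro n
    rw [hω, hω, ← Gamma_ratio_eq ha hu (by positivity) hK]
    push_cast
    ring_nf
  suffices h : lambdaOne (d + 1) p 0 (Fin.cons n i) = -eigenAbs (1 / p 0) (tailSum p i) n by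
    rw [h, abs_neg, abs_of_nonneg hpos]
  unfold lambdaOne eigenAbs
  simp only [Fin.cons_zero, Fin.update_cons_zero]
  rcases n with _ | n
  · simp only [if_true]
    rw [ratio]; simp
  · simp only [Nat.succ_ne_zero, if_false, Nat.add_sub_cancel]
    rw [ratio, ratio]
    push_cast
    ring

lemma tailSum_bounds {d : ℕ} {p : Fin (d + 1) → ℝ} (hp : ∀ j, 0 < p j) (i : Fin d → ℕ) :
    (1 / (1 + ∑ j, p j)) * (1 + ∑ j, (i j : ℝ)) ≤ tailSum p i ∧
      tailSum p i ≤ (1 + ∑ j, 1 / p j) * (1 + ∑ j, (i j : ℝ)) := by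
  have hP : 0 ≤ ∑ j, p j := Finset.sum_nonneg fun j _ => (hp j).le
  have hQ : 0 ≤ ∑ j, 1 / p j := Finset.sum_nonneg fun j _ => (one_div_pos.2 (hp j)).le
  have hI : 0 ≤ ∑ j, (i j : ℝ) := by positivity
  unfold tailSum
  constructor
  · rw [mul_add, Finset.mul_sum, mul_one]
    apply add_le_add
    · rw [div_le_one (by linarith)]; linarith
    · apply Finset.sum_le_sum
      intro j _
      rw [one_div_mul_eq_div]
      have : p j.succ ≤ ∑ j, p j :=
        Finset.single_le_sum (f := p) (fun j _ => (hp j).le) (Finset.mem_univ _)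
      apply div_le_div₀ (by positivity) (by linarith) (hp _) (by linarith)
  · have h1 : ∑ j, ((i j : ℝ) + 1) / p j.succ =
        ∑ j, (1 / p j.succ) * (i j : ℝ) + ∑ j : Fin d, 1 / p j.succ := by
      rw [← Finset.sum_add_distrib]
      exact Finset.sum_congr rfl fun j _ => by ring
    have h2 : ∑ j : Fin d, 1 / p j.succ ≤ ∑ j, 1 / p j := by
      rw [Fin.sum_univ_succ]; linarith [one_div_pos.2 (hp 0)]
    have h3 : ∑ j, (1 / p j.succ) * (i j : ℝ) ≤ (∑ j, 1 / p j) * ∑ j, (i j : ℝ) := by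
      rw [Finset.mul_sum]
      apply Finset.sum_le_sum
      intro j _
      apply mul_le_mul_of_nonneg_right _ (Nat.cast_nonneg _)
      exact Finset.single_le_sum (f := fun j => 1 / p j)
        (fun j _ => (one_div_pos.2 (hp j)).le) (Finset.mem_univ _)
    rw [h1]
    nlinarith

lemma abs_lambdaOne_comparable {d : ℕ} {p : Fin (d + 1) → ℝ} (hp : ∀ j, 0 < p j) :
    ∃ c C : ℝ, 0 < c ∧ 0 < C ∧ ∀ (n : ℕ) (i : Fin d → ℕ),
      c * model (1 / p 0) (n + 1) (1 + ∑ j, (i j : ℝ)) ≤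
          |lambdaOne (d + 1) p 0 (Fin.cons n i)| ∧
        |lambdaOne (d + 1) p 0 (Fin.cons n i)| ≤
          C * model (1 / p 0) (n + 1) (1 + ∑ j, (i j : ℝ)) := by
  have ha : 0 < 1 / p 0 := one_div_pos.2 (hp 0)
  obtain ⟨c, C, hc, hC, hb⟩ := eigenAbs_bounds ha
  have hP : 0 ≤ ∑ j, p j := Finset.sum_nonneg fun j _ => (hp j).le
  have hQ : 0 ≤ ∑ j, 1 / p j := Finset.sum_nonneg fun j _ => (one_div_pos.2 (hp j)).le
  set a := 1 / p 0 with hadef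
  have hp0 : 0 < p 0 := hp 0
  set lo := 1 / (1 + ∑ j, p j) with hlo_def
  set hi := 1 + ∑ j, 1 / p j with hhi_def
  have hlo : 0 < lo := by positivity
  have hhi : 0 < hi := by positivity
  have hlo_a : lo ≤ a := by
    apply one_div_le_one_div_of_le hp0
    have : p 0 ≤ ∑ j, p j :=
      Finset.single_le_sum (f := p) (fun j _ => (hp j).le) (Finset.mem_univ _)
    linarith
  have hhi_a : a ≤ hi := by
    have : 1 / p 0 ≤ ∑ j, 1 / p j :=
      Finset.single_le_sum (f := fun j => 1 / p j)
        (fun j _ => (one_div_pos.2 (hp j)).le) (Finset.mem_univ _)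
    linarith
  refine ⟨c / ((lo⁻¹ / hi⁻¹) ^ a * (lo⁻¹ / hi⁻¹ ^ 2)), C * ((hi / lo) ^ a * (hi / lo ^ 2)),
    by positivity, by positivity, fun n i => ?_⟩
  have hu := one_le_tailSum hp i
  have hn : (0 : ℝ) < n + 1 := by positivity
  have hk : (0 : ℝ) < 1 + ∑ j, (i j : ℝ) := by positivity
  have hb' := hb _ hu n
  have hm1 : 0 < model a ((n + 1) * a) (tailSum p i) := model_pos (by positivity) (by linarith)
  obtain ⟨ht1, ht2⟩ := tailSum_bounds hp i
  have hup := model_le_of_comparable (t := (n + 1) * a) ha hlo hn hk (by nlinarith) (by nlinarith)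
    ht1 ht2
  have hdown := model_le_of_comparable (lo := hi⁻¹) (hi := lo⁻¹) (N := (n + 1) * a)
    (k := tailSum p i) (t := (n : ℝ) + 1) (u := 1 + ∑ j, (i j : ℝ)) ha (by positivity)
    (by positivity) (by linarith)
    (by rw [inv_mul_le_iff₀ hhi]; nlinarith) (by rw [le_inv_mul_iff₀ hlo]; nlinarith)
    (by rw [inv_mul_le_iff₀ hhi]; exact ht2) (by rw [le_inv_mul_iff₀ hlo]; exact ht1)
  rw [abs_lambdaOne_cons hp n i ((mul_pos hc hm1).le.trans hb'.1)]
  constructor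
  · refine le_trans ?_ hb'.1
    rw [div_mul_eq_mul_div, div_le_iff₀ (by positivity)]
    calc _ ≤ _ := mul_le_mul_of_nonneg_left hdown hc.le
      _ = _ := by ring
  · refine hb'.2.trans ?_
    calc _ ≤ _ := mul_le_mul_of_nonneg_left hup hC.le
      _ = _ := by ring

/-! ### Powers of `1 + |i|` over `ℕ^d` -/

lemma summable_nat_succ_rpow {s : ℝ} : Summable (fun n : ℕ => ((n : ℝ) + 1) ^ s) ↔ s < -1 := by
  rw [← Real.summable_nat_rpow, ← summable_nat_add_iff 1 (f := fun n : ℕ => (n : ℝ) ^ s)]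
  simp

lemma summable_prod_apply {g : ℕ → ℝ} (hg : Summable g) (h0 : ∀ n, 0 ≤ g n) :
    ∀ d : ℕ, Summable (fun i : Fin d → ℕ => ∏ j, g (i j)) := by
  intro d
  induction d with
  | zero => exact Summable.of_finite
  | succ d ih =>
    rw [← (Fin.consEquiv (fun _ : Fin (d + 1) => ℕ)).summable_iff]
    refine (hg.mul_of_nonneg ih h0 fun i => Finset.prod_nonneg fun j _ => h0 _).congr ?_
    rintro ⟨n, i⟩
    simp [Fin.consEquiv, Fin.prod_univ_succ]

lemma summable_one_add_sum_rpow {d : ℕ} {α : ℝ} (hα : (d : ℝ) < α) :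
    Summable (fun i : Fin d → ℕ => (1 + ∑ j, (i j : ℝ)) ^ (-α)) := by
  rcases Nat.eq_zero_or_pos d with rfl | hd
  · exact Summable.of_finite
  have hdpos : (0 : ℝ) < d := by exact_mod_cast hd
  have h1 : Summable (fun n : ℕ => ((n : ℝ) + 1) ^ (-(α / d))) := by
    rw [summable_nat_succ_rpow, neg_lt_neg_iff, one_lt_div hdpos]; exact hα
  refine (summable_prod_apply h1 (fun n => by positivity) d).of_nonneg_of_le
    (fun i => by positivity) fun i => ?_
  have e : (1 + ∑ j, (i j : ℝ)) ^ (-α) = ∏ _j : Fin d, (1 + ∑ j, (i j : ℝ)) ^ (-(α / d)) := by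
    rw [Finset.prod_const, Finset.card_univ, Fintype.card_fin, ← Real.rpow_natCast,
      ← Real.rpow_mul (by positivity)]
    congr 1
    field_simp
  rw [e]
  refine Finset.prod_le_prod (fun j _ => by positivity) fun j _ => ?_
  have hj : (i j : ℝ) ≤ ∑ j, (i j : ℝ) :=
    Finset.single_le_sum (f := fun j => (i j : ℝ)) (fun j _ => Nat.cast_nonneg _)
      (Finset.mem_univ j)
  apply Real.rpow_le_rpow_of_nonpos (by positivity) (by linarith)
  rw [neg_nonpos]
  exact div_nonneg (by linarith) hdpos.le

/-- Induction on the dimension: with `s = 1 + |i|`, the `s` terms with first entry below `s` are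
each at least `(2 s)^(-α)`, so summing over the first entry leaves at least a constant times
`s^(1-α)`. -/
lemma lt_of_summable_one_add_sum_rpow : ∀ (d : ℕ) (α : ℝ),
    Summable (fun i : Fin (d + 1) → ℕ => (1 + ∑ j, (i j : ℝ)) ^ (-α)) → (d : ℝ) + 1 < α := by
  intro d
  induction d with
  | zero =>
    intro α h
    rw [← (Equiv.funUnique (Fin 1) ℕ).symm.summable_iff] at h
    have h' : Summable (fun n : ℕ => ((n : ℝ) + 1) ^ (-α)) := h.congr fun n => by
      simp [add_comm]
    rw [summable_nat_succ_rpow] at h'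
    simp; linarith
  | succ d ih =>
    intro α h
    rw [← (Fin.consEquiv (fun _ : Fin (d + 2) => ℕ)).summable_iff] at h
    have h' : Summable (fun x : ℕ × (Fin (d + 1) → ℕ) =>
        (1 + ((x.1 : ℝ) + ∑ j, (x.2 j : ℝ))) ^ (-α)) := h.congr fun x => by
      simp [Fin.consEquiv, Fin.sum_univ_succ]
    -- The slice with all other entries zero; it makes `x ↦ x ^ (-α)` antitone below.
    have hα : 1 < α := by
      have h0 : Summable (fun n : ℕ => ((n : ℝ) + 1) ^ (-α)) :=
        (h'.comp_injective (i := fun n : ℕ => (n, fun _ : Fin (d + 1) => 0))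
          (fun _ _ h => (Prod.ext_iff.1 h).1)).congr fun n => by simp [add_comm]
      rw [summable_nat_succ_rpow] at h0
      linarith
    have h2 := (summable_prod_of_nonneg (fun _ => by positivity)).1 h'.prod_symm
    simp only [Prod.fst_swap, Prod.snd_swap] at h2
    have h3 : Summable (fun i : Fin (d + 1) → ℕ =>
        (2 : ℝ) ^ (-α) * (1 + ∑ j, (i j : ℝ)) ^ (-(α - 1))) := by
      refine h2.2.of_nonneg_of_le (fun i => by positivity) fun i => ?_
      have hs : (0 : ℝ) < 1 + ∑ j, (i j : ℝ) := by positivity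
      refine le_trans ?_ ((h2.1 i).sum_le_tsum (Finset.range (1 + ∑ j, i j))
        fun n _ => by positivity)
      calc (2 : ℝ) ^ (-α) * (1 + ∑ j, (i j : ℝ)) ^ (-(α - 1))
          = ∑ n ∈ Finset.range (1 + ∑ j, i j), (2 * (1 + ∑ j, (i j : ℝ))) ^ (-α) := by
            rw [Finset.sum_const, Finset.card_range, nsmul_eq_mul,
              Real.mul_rpow (by norm_num) hs.le, show -(α - 1) = 1 + -α by ring,
              Real.rpow_add hs, Real.rpow_one]
            push_cast; ring
        _ ≤ _ := by
            refine Finset.sum_le_sum fun n hn => ?_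
            have hn' : (n : ℝ) ≤ 1 + ∑ j, (i j : ℝ) := by
              exact_mod_cast (Finset.mem_range.1 hn).le
            exact Real.rpow_le_rpow_of_nonpos (by positivity) (by linarith) (by linarith)
    have := ih (α - 1) ((summable_mul_left_iff (by positivity)).1 h3)
    push_cast; linarith

/-! ### Summability of the model -/

lemma summable_model_one_iff {a q : ℝ} (ha : 0 < a) (hq : 0 < q) :
    Summable (fun n : ℕ => model a ((n : ℝ) + 1) 1 ^ q) ↔ 1 / 2 < q := by
  have key : Summable (fun n : ℕ => ((n : ℝ) + 1) ^ (-(2 * q))) ↔ 1 / 2 < q := by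
    rw [summable_nat_succ_rpow]; constructor <;> intro h <;> linarith
  have e : ∀ n : ℕ, (((n : ℝ) + 1) ^ 2)⁻¹ ^ q = ((n : ℝ) + 1) ^ (-(2 * q)) := by
    intro n
    rw [Real.inv_rpow (by positivity), ← Real.rpow_natCast, ← Real.rpow_mul (by positivity),
      Real.rpow_neg (by positivity)]
    norm_num
  rw [← key]
  constructor
  · intro h
    rw [← summable_mul_left_iff (a := ((1 / 2 : ℝ) ^ a * (1 / 2)) ^ q) (by positivity)]
    refine h.of_nonneg_of_le (fun n => by positivity) fun n => ?_
    rw [← e, ← Real.mul_rpow (by positivity) (by positivity)]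
    refine Real.rpow_le_rpow (by positivity) ?_ hq.le
    have hn : (0 : ℝ) ≤ n := Nat.cast_nonneg n
    unfold model
    rw [mul_assoc]
    gcongr ?_ ^ a * ?_
    · rw [div_le_div_iff₀ (by positivity) (by positivity)]; linarith
    · rw [← one_div, div_mul_div_comm, div_le_div_iff₀ (by positivity) (by positivity)]; nlinarith
  · intro h
    refine h.of_nonneg_of_le (fun n => Real.rpow_nonneg (model_pos (by positivity) one_pos).le _)
      fun n => ?_
    rw [← e]
    refine Real.rpow_le_rpow (model_pos (by positivity) one_pos).le ?_ hq.le
    have hn : (0 : ℝ) ≤ n := Nat.cast_nonneg n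
    unfold model
    rw [← one_mul (((n : ℝ) + 1) ^ 2)⁻¹]
    apply mul_le_mul _ _ (by positivity) one_pos.le
    · apply Real.rpow_le_one (by positivity) _ ha.le
      rw [div_le_one (by positivity)]; linarith
    · rw [← one_div, div_le_div_iff₀ (by positivity) (by positivity)]; nlinarith

/-- `(N + k)^(-q(a+1))` is split as `(N + k)^(-θ) (N + k)^(-(q(a+1)-θ)) ≤ N^(-θ) k^(-(q(a+1)-θ))`. -/
lemma model_rpow_le {a q θ N k : ℝ} (hN : 0 < N) (hk : 0 < k)
    (hθ : 0 ≤ θ) (hθ' : θ ≤ q * (a + 1)) :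
    model a N k ^ q ≤ N ^ (q * (a - 1) - θ) * k ^ (-(q * a - θ)) := by
  have hs : 0 < N + k := by linarith
  have e : model a N k ^ q = N ^ (q * (a - 1)) * k ^ q *
      ((N + k) ^ (-θ) * (N + k) ^ (-(q * (a + 1) - θ))) := by
    have hl : ∀ x y : ℝ, 0 < x → x ^ y = Real.exp (Real.log x * y) :=
      fun x y hx => Real.rpow_def_of_pos hx y
    rw [hl _ q (model_pos hN hk), model, Real.log_mul (by positivity) (by positivity),
      Real.log_rpow (by positivity), Real.log_div hN.ne' hs.ne',
      Real.log_div hk.ne' (by positivity), Real.log_mul hN.ne' hs.ne',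
      hl _ _ hN, hl _ _ hk, hl _ _ hs, hl _ _ hs, ← Real.exp_add, ← Real.exp_add, ← Real.exp_add]
    ring_nf
  have e2 : N ^ (q * (a - 1) - θ) * k ^ (-(q * a - θ)) =
      N ^ (q * (a - 1)) * k ^ q * (N ^ (-θ) * k ^ (-(q * (a + 1) - θ))) := by
    rw [sub_eq_add_neg, Real.rpow_add hN,
      show -(q * a - θ) = q + -(q * (a + 1) - θ) by ring, Real.rpow_add hk]
    ring
  rw [e, e2]
  gcongr ?_ * (?_ * ?_)
  · exact Real.rpow_le_rpow_of_nonpos hN (by linarith) (by linarith)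
  · exact Real.rpow_le_rpow_of_nonpos hk (by linarith) (by linarith)

lemma summable_model {d : ℕ} {a q : ℝ} (h1 : (d : ℝ) < q * a)
    (h2 : (d : ℝ) + 1 < q) :
    Summable (fun x : ℕ × (Fin d → ℕ) =>
      model a ((x.1 : ℝ) + 1) (1 + ∑ j, (x.2 j : ℝ)) ^ q) := by
  obtain ⟨θ, hθ1, hθ2⟩ := exists_between
    (show max 0 (q * (a - 1) + 1) < q * a - d from max_lt (by linarith) (by linarith))
  have hd : (0 : ℝ) ≤ d := Nat.cast_nonneg d
  have hθ0 := (le_max_left _ _).trans_lt hθ1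
  have hθ3 := (le_max_right _ _).trans_lt hθ1
  have s1 : Summable (fun n : ℕ => ((n : ℝ) + 1) ^ (q * (a - 1) - θ)) :=
    summable_nat_succ_rpow.2 (by linarith)
  have s2 : Summable (fun i : Fin d → ℕ => (1 + ∑ j, (i j : ℝ)) ^ (-(q * a - θ))) :=
    summable_one_add_sum_rpow (by linarith)
  refine (s1.mul_of_nonneg s2 (fun n => by positivity) (fun i => by positivity)).of_nonneg_of_le
    (fun x => Real.rpow_nonneg (model_pos (by positivity) (by positivity)).le _) fun x => ?_
  exact model_rpow_le (by positivity) (by positivity) hθ0.le (by nlinarith)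

/-- On the slice `n = 0` the model is at least a constant times `k^(-a)`. -/
lemma lt_of_summable_model_slice {d : ℕ} {a q : ℝ} (ha : 0 < a) (hq : 0 < q)
    (h : Summable (fun x : ℕ × (Fin (d + 1) → ℕ) =>
      model a ((x.1 : ℝ) + 1) (1 + ∑ j, (x.2 j : ℝ)) ^ q)) : (d : ℝ) + 1 < q * a := by
  have h0 := h.comp_injective (i := fun i : Fin (d + 1) → ℕ => ((0 : ℕ), i))
    (fun _ _ h => (Prod.ext_iff.1 h).2)
  apply lt_of_summable_one_add_sum_rpow
  rw [← summable_mul_left_iff (a := ((1 / 2 : ℝ) ^ a * (1 / 2)) ^ q) (by positivity)]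
  refine h0.of_nonneg_of_le (fun i => by positivity) fun i => ?_
  have hS : (0 : ℝ) ≤ ∑ j, (i j : ℝ) := by positivity
  simp only [Function.comp_apply, Nat.cast_zero, zero_add]
  set k : ℝ := 1 + ∑ j, (i j : ℝ) with hk_def
  have hk : 1 ≤ k := by linarith
  have hk0 : 0 < k := by linarith
  have e : k ^ (-(q * a)) = ((1 / k) ^ a) ^ q := by
    rw [one_div, Real.inv_rpow hk0.le, Real.inv_rpow (by positivity), ← Real.rpow_mul hk0.le,
      ← Real.rpow_neg hk0.le, mul_comm]
  rw [e, ← Real.mul_rpow (by positivity) (by positivity)]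
  refine Real.rpow_le_rpow (by positivity) ?_ hq.le
  rw [mul_right_comm, ← Real.mul_rpow (by positivity) (by positivity)]
  unfold model
  gcongr ?_ ^ a * ?_
  · rw [div_mul_div_comm, div_le_div_iff₀ (by positivity) (by positivity)]; linarith
  · rw [div_le_div_iff₀ (by positivity) (by positivity)]; linarith

/-- An injection of `ℕ^(d+2)` into itself, `ℕ^(d+2)` being written as `ℕ × ℕ^(d+1)`: with
`M = n + |i|`, it sends `(n, i)` to `(M, (M + n, i₁, …, i_d))`. On its image `N = 1 + M` and the
sum `k` of the other entries plus `1` satisfy `N ≤ k ≤ 2 N`. -/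
def diagMap (d : ℕ) (x : ℕ × (Fin (d + 1) → ℕ)) : ℕ × (Fin (d + 1) → ℕ) :=
  (x.1 + ∑ j, x.2 j, Fin.cons (x.1 + ∑ j, x.2 j + x.1) (Fin.tail x.2))

lemma diagMap_injective (d : ℕ) : Function.Injective (diagMap d) := by
  rintro ⟨n, i⟩ ⟨n', i'⟩ h
  simp only [diagMap, Prod.mk.injEq, Fin.cons_inj, Fin.sum_univ_succ] at h
  obtain ⟨h1, h2, h3⟩ := h
  have hn : n = n' := by omega
  have ht : ∀ j, i (Fin.succ j) = i' (Fin.succ j) := fun j => congrFun h3 j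
  simp only [ht] at h1
  have h0 : i 0 = i' 0 := by omega
  refine Prod.ext hn (funext fun j => ?_)
  exact Fin.cases h0 ht j

/-- On the image of `diagMap` the model is at least a constant times `N⁻¹`. -/
lemma lt_of_summable_model_diag {d : ℕ} {a q : ℝ} (ha : 0 < a) (hq : 0 < q)
    (h : Summable (fun x : ℕ × (Fin (d + 1) → ℕ) =>
      model a ((x.1 : ℝ) + 1) (1 + ∑ j, (x.2 j : ℝ)) ^ q)) : (d : ℝ) + 2 < q := by
  have h0 := h.comp_injective (diagMap_injective d)
  have goal := lt_of_summable_one_add_sum_rpow (d + 1) q ?_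
  · push_cast at goal; linarith
  rw [← (Fin.consEquiv (fun _ : Fin (d + 2) => ℕ)).summable_iff,
    ← summable_mul_left_iff (a := ((1 / 3 : ℝ) ^ a * (1 / 3)) ^ q) (by positivity)]
  refine h0.of_nonneg_of_le (fun i => by simp only [Function.comp_apply]; positivity) ?_
  rintro ⟨n, i⟩
  simp only [Function.comp_apply, Fin.consEquiv, Equiv.coe_fn_mk, diagMap, Fin.sum_univ_succ,
    Fin.cons_zero, Fin.cons_succ, Fin.tail]
  push_cast
  have hT : (0 : ℝ) ≤ ∑ j : Fin d, (i j.succ : ℝ) := by positivity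
  set T : ℝ := ∑ j : Fin d, (i j.succ : ℝ) with hT_def
  have hn : (0 : ℝ) ≤ n := Nat.cast_nonneg n
  have hi : (0 : ℝ) ≤ i 0 := Nat.cast_nonneg _
  have hN : 0 < 1 + ((n : ℝ) + ((i 0 : ℝ) + T)) := by positivity
  rw [Real.rpow_neg hN.le, ← Real.inv_rpow hN.le, ← Real.mul_rpow (by positivity) (by positivity)]
  refine Real.rpow_le_rpow (by positivity) ?_ hq.le
  unfold model
  rw [mul_assoc]
  gcongr ?_ ^ a * ?_
  · rw [div_le_div_iff₀ (by positivity) (by positivity)]; linarith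
  · rw [← one_div, div_mul_div_comm, div_le_div_iff₀ (by positivity) (by positivity)]
    nlinarith

/-- `∑_{i ∈ ℕ^m} |λ(i)|^q` converges iff (`m = 1` and `q > 1/2`) or
(`m > 1` and `q > max{m, p₁(m-1)}`). -/
theorem self_commutator_summable_iff_egg_one (m : ℕ) (hm : 0 < m)
    (p : Fin m → ℝ) (hp : ∀ j, 0 < p j) (q : ℝ) (hq : 0 < q) :
    Summable (fun i : Fin m → ℕ => |lambdaOne m p ⟨0, hm⟩ i| ^ q) ↔
      ((m = 1 ∧ 1 / 2 < q) ∨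
        (1 < m ∧ max (m : ℝ) (p ⟨0, hm⟩ * ((m : ℝ) - 1)) < q)) := by
  obtain ⟨d, rfl⟩ : ∃ d, m = d + 1 := ⟨m - 1, by omega⟩
  change Summable (fun i : Fin (d + 1) → ℕ => |lambdaOne (d + 1) p 0 i| ^ q) ↔
    ((d + 1 = 1 ∧ 1 / 2 < q) ∨
      (1 < d + 1 ∧ max ((d + 1 : ℕ) : ℝ) (p 0 * (((d + 1 : ℕ) : ℝ) - 1)) < q))
  have hp0 := hp 0
  have ha : 0 < 1 / p 0 := one_div_pos.2 hp0
  obtain ⟨c, C, hc, hC, hb⟩ := abs_lambdaOne_comparable hp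
  have hmod : ∀ x : ℕ × (Fin d → ℕ),
      0 ≤ model (1 / p 0) ((x.1 : ℝ) + 1) (1 + ∑ j, (x.2 j : ℝ)) :=
    fun x => (model_pos (by positivity) (by positivity)).le
  have red : Summable (fun i : Fin (d + 1) → ℕ => |lambdaOne (d + 1) p 0 i| ^ q) ↔
      Summable (fun x : ℕ × (Fin d → ℕ) =>
        model (1 / p 0) ((x.1 : ℝ) + 1) (1 + ∑ j, (x.2 j : ℝ)) ^ q) := by
    rw [← (Fin.consEquiv (fun _ : Fin (d + 1) => ℕ)).summable_iff]
    constructor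
    · intro h
      rw [← summable_mul_left_iff (a := c ^ q) (by positivity)]
      refine h.of_nonneg_of_le (fun x => mul_nonneg (by positivity)
        (Real.rpow_nonneg (hmod x) _)) fun x => ?_
      rw [← Real.mul_rpow hc.le (hmod x)]
      exact Real.rpow_le_rpow (mul_nonneg hc.le (hmod x)) (hb x.1 x.2).1 hq.le
    · intro h
      refine (h.mul_left (C ^ q)).of_nonneg_of_le
        (fun x => by simp only [Function.comp_apply]; positivity) fun x => ?_
      rw [← Real.mul_rpow hC.le (hmod x)]
      exact Real.rpow_le_rpow (abs_nonneg _) (hb x.1 x.2).2 hq.le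
  rw [red]
  rcases d with _ | d
  · rw [← (Equiv.prodUnique ℕ (Fin 0 → ℕ)).symm.summable_iff]
    have := summable_model_one_iff ha hq
    simpa [Function.comp_def] using this
  · have e : p 0 * (((d + 1 + 1 : ℕ) : ℝ) - 1) < q ↔ (d : ℝ) + 1 < q * (1 / p 0) := by
      rw [mul_one_div, lt_div_iff₀ hp0]; push_cast; ring_nf
    rw [max_lt_iff, e]
    constructor
    · intro h
      have h1 := lt_of_summable_model_slice ha hq h
      have h2 := lt_of_summable_model_diag ha hq h
      exact Or.inr ⟨by omega, by push_cast; linarith, h1⟩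
    · rintro (⟨h, _⟩ | ⟨_, h1, h2⟩)
      · omega
      · push_cast at h1
        exact summable_model (by push_cast; exact h2) (by push_cast; exact h1)
end

section
/- Assume m > 1. For a multi-index i ∈ ℕ^m, let e_1 and e_2 denote the multi-indices with a single 1 in positions 1 and 2 respectively, and define μ(i) = | √( ω₁(i) ω₁(i + e_1 − e_2) / ω₁(i − e_2)² ) − √( ω₁(i + e_1)² / ( ω₁(i) ω₁(i + e_1 − e_2) ) ) | when i_2 ≥ 1, and μ(i) = 0 when i_2 = 0. Then for every real p > 0, the series ∑_{i ∈ ℕ^m} μ(i)^p converges if and only if p > m. -/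
/-- `μ(i)`: the eigenvalue of `√([M_{z₂}, M_{z₁}*][M_{z₂}, M_{z₁}*]*)` at the
normalized monomial `z^i/√ω₁(i)`; `x` and `y` are the two distinguished coordinates
(`x` for `z₁`, `y` for `z₂`). -/
noncomputable def muOne (m : ℕ) (p : Fin m → ℝ) (x y : Fin m) (i : Fin m → ℕ) : ℝ :=
  if i y = 0 then 0
  else
    |Real.sqrt (omegaOne m p i *
          omegaOne m p (Function.update (Function.update i x (i x + 1)) y (i y - 1)) /
          (omegaOne m p (Function.update i y (i y - 1))) ^ 2)
      - Real.sqrt ((omegaOne m p (Function.update i x (i x + 1))) ^ 2 /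
          (omegaOne m p i *
            omegaOne m p (Function.update (Function.update i x (i x + 1)) y (i y - 1))))|

namespace EggOne

open Real

/-! ### Secant bounds for `log Γ` -/

/-- The logarithm of the Gamma function. -/
noncomputable def logGamma (x : ℝ) : ℝ := Real.log (Real.Gamma x)

lemma logGamma_add_one {x : ℝ} (hx : 0 < x) :
    logGamma (x + 1) = logGamma x + Real.log x := by
  unfold logGamma
  rw [Real.Gamma_add_one hx.ne', Real.log_mul hx.ne' (Real.Gamma_pos_of_pos hx).ne', add_comm]

/-- Convexity of `log Γ`: the secant slope on `[x, x+s]` is at most the one on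
`[x+s, x+s+1]`, which is `log (x+s)`. -/
lemma logGamma_sub_le {x s : ℝ} (hx : 0 < x) (hs : 0 < s) :
    logGamma (x + s) - logGamma x ≤ s * Real.log (x + s) := by
  have h := Real.convexOn_log_Gamma.slope_mono_adjacent (x := x) (y := x + s) (z := x + s + 1)
    hx (by simp only [Set.mem_Ioi]; linarith) (by linarith) (by linarith)
  simp only [Function.comp_apply, ← logGamma.eq_1] at h
  rw [logGamma_add_one (by linarith), div_le_div_iff₀ (by linarith) (by linarith)] at h
  linarith

/-- Convexity of `log Γ`: the secant slope on `[x, x+s]` is at least the one on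
`[x-1, x]`, which is `log (x-1)`. -/
lemma le_logGamma_sub {x s : ℝ} (hx : 1 < x) (hs : 0 < s) :
    s * Real.log (x - 1) ≤ logGamma (x + s) - logGamma x := by
  have h := Real.convexOn_log_Gamma.slope_mono_adjacent (x := x - 1) (y := x) (z := x + s)
    (by simp only [Set.mem_Ioi]; linarith) (by simp only [Set.mem_Ioi]; linarith)
    (by linarith) (by linarith)
  simp only [Function.comp_apply, ← logGamma.eq_1] at h
  have h1 := logGamma_add_one (x := x - 1) (by linarith)
  rw [sub_add_cancel] at h1
  rw [h1, div_le_div_iff₀ (by linarith) (by linarith)] at h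
  rw [h1]
  linarith

lemma Gamma_add_le {x s : ℝ} (hx : 0 < x) (hs : 0 < s) :
    Gamma (x + s) ≤ (x + s) ^ s * Gamma x := by
  have h := logGamma_sub_le hx hs
  have h0 := Real.Gamma_pos_of_pos hx
  have h1 := Real.Gamma_pos_of_pos (add_pos hx hs)
  have h2 : 0 < (x + s) ^ s := Real.rpow_pos_of_pos (by linarith) _
  rw [← Real.log_le_log_iff h1 (by positivity), Real.log_mul h2.ne' h0.ne',
    Real.log_rpow (by linarith)]
  unfold logGamma at h
  linarith

lemma le_Gamma_add {x s : ℝ} (hx : 1 < x) (hs : 0 < s) :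
    (x - 1) ^ s * Gamma x ≤ Gamma (x + s) := by
  have h := le_logGamma_sub hx hs
  have h0 := Real.Gamma_pos_of_pos (show 0 < x by linarith)
  have h1 := Real.Gamma_pos_of_pos (show 0 < x + s by linarith)
  have h2 : 0 < (x - 1) ^ s := Real.rpow_pos_of_pos (by linarith) _
  rw [← Real.log_le_log_iff (by positivity) h1, Real.log_mul h2.ne' h0.ne',
    Real.log_rpow (by linarith)]
  unfold logGamma at h
  linarith

/-! ### The mixed second difference of `log Γ` -/

/-- The mixed second difference of `log Γ` at `T` with steps `a` and `b`. -/
noncomputable def secondDiff (a b T : ℝ) : ℝ :=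
  logGamma (T + a + b) - logGamma (T + a) - logGamma (T + b) + logGamma T

/-- `T+a` and `T+b` are the convex combinations of `T` and `T+a+b` with exchanged weights. -/
lemma secondDiff_nonneg {a b T : ℝ} (ha : 0 < a) (hb : 0 < b) (hT : 0 < T) :
    0 ≤ secondDiff a b T := by
  have hz : T + a + b ∈ Set.Ioi (0 : ℝ) := by simp only [Set.mem_Ioi]; linarith
  have hab : 0 < a + b := by linarith
  -- `T + c` is the convex combination of `T` and `T + a + b` with weights `d, c` over `a + b`.
  have key : ∀ c d : ℝ, 0 < c → 0 < d → c + d = a + b →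
      logGamma (T + c) ≤ (d / (a + b)) * logGamma T + (c / (a + b)) * logGamma (T + a + b) := by
    intro c d hc hd hcd
    have h := Real.convexOn_log_Gamma.2 (show T ∈ Set.Ioi (0 : ℝ) from hT) hz
      (show 0 ≤ d / (a + b) by positivity) (show 0 ≤ c / (a + b) by positivity)
      (by rw [← add_div, add_comm d, hcd, div_self hab.ne'])
    simp only [Function.comp_apply, ← logGamma.eq_1, smul_eq_mul] at h
    have e : d / (a + b) * T + c / (a + b) * (T + a + b) = T + c := by
      field_simp
      have : d = a + b - c := by linarith
      subst this
      ring
    rwa [e] at h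
  have h1 := key a b ha hb rfl
  have h2 := key b a hb ha (add_comm _ _)
  have h3 : b / (a + b) = 1 - a / (a + b) := by field_simp; ring
  rw [h3] at h1 h2
  unfold secondDiff
  linarith

lemma secondDiff_le {a b T : ℝ} (ha : 0 < a) (hb : 0 < b) (hT : 1 < T) :
    secondDiff a b T ≤ b * (a + b + 1) / (T - 1) := by
  have h1 := logGamma_sub_le (x := T + a) (s := b) (by linarith) hb
  have h2 := le_logGamma_sub hT hb
  have hT1 : 0 < T - 1 := by linarith
  have h3 := Real.log_le_sub_one_of_pos (x := (T + a + b) / (T - 1))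
    (div_pos (by linarith) hT1)
  rw [Real.log_div (by linarith) hT1.ne'] at h3
  have h4 : (T + a + b) / (T - 1) - 1 = (a + b + 1) / (T - 1) := by field_simp; ring
  rw [h4] at h3
  have h5 := mul_le_mul_of_nonneg_left h3 hb.le
  unfold secondDiff
  rw [mul_div_assoc]
  linarith

/-- One step of the recursion: by `Γ(x+1) = xΓ(x)`, the second difference at `T` exceeds the one
at `T+1` by `log ((T+a)(T+b) / (T(T+a+b)))`, which is at least `ab / ((T+a)(T+b))`; this bound
dominates the telescoping quantity on the left. -/
lemma secondDiff_step {a b T : ℝ} (ha : 0 < a) (hb : 0 < b) (hT : 0 < T) :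
    a * b / (T + a + b) - a * b / (T + 1 + a + b) ≤
      secondDiff a b T - secondDiff a b (T + 1) := by
  have e1 := logGamma_add_one hT
  have e2 := logGamma_add_one (x := T + a) (by linarith)
  have e3 := logGamma_add_one (x := T + b) (by linarith)
  have e4 := logGamma_add_one (x := T + a + b) (by linarith)
  have hTa : 0 < T + a := by linarith
  have hTb : 0 < T + b := by linarith
  have hTab : 0 < T + a + b := by linarith
  have h := Real.one_sub_inv_le_log_of_pos (x := ((T + a) * (T + b)) / (T * (T + a + b)))
    (by positivity)
  rw [Real.log_div (by positivity) (by positivity), Real.log_mul hTa.ne' hTb.ne',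
    Real.log_mul hT.ne' hTab.ne', inv_div] at h
  have h6 : 1 - T * (T + a + b) / ((T + a) * (T + b)) = a * b / ((T + a) * (T + b)) := by
    field_simp; ring
  have h7 : a * b / (T + a + b) - a * b / (T + 1 + a + b) =
      a * b / ((T + a + b) * (T + 1 + a + b)) := by
    have : 0 < T + 1 + a + b := by linarith
    field_simp; ring
  have h8 : a * b / ((T + a + b) * (T + 1 + a + b)) ≤ a * b / ((T + a) * (T + b)) := by
    apply div_le_div_of_nonneg_left (by positivity) (by positivity)
    apply mul_le_mul <;> linarith
  have e : secondDiff a b T - secondDiff a b (T + 1) =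
      Real.log (T + a) + Real.log (T + b) - (Real.log T + Real.log (T + a + b)) := by
    unfold secondDiff
    rw [show T + 1 + a + b = T + a + b + 1 by ring, show T + 1 + a = T + a + 1 by ring,
      show T + 1 + b = T + b + 1 by ring, e1, e2, e3, e4]
    ring
  rw [e, h7]
  linarith

/-- Telescoping `secondDiff_step` to infinity. -/
lemma le_secondDiff {a b T : ℝ} (ha : 0 < a) (hb : 0 < b) (hT : 0 < T) :
    a * b / (T + a + b) ≤ secondDiff a b T := by
  have h : ∀ n : ℕ, a * b / (T + a + b) - a * b / (T + n + a + b) ≤ secondDiff a b T := by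
    intro n
    have h1 : a * b / (T + a + b) - a * b / (T + n + a + b) ≤
        secondDiff a b T - secondDiff a b (T + n) := by
      induction n with
      | zero => simp
      | succ n ih =>
        have h2 := secondDiff_step (T := T + n) ha hb (by positivity)
        rw [show T + ((n + 1 : ℕ) : ℝ) = T + n + 1 by push_cast; ring]
        linarith
    have h3 := secondDiff_nonneg (T := T + n) ha hb (by positivity)
    linarith
  have lim : Filter.Tendsto (fun n : ℕ => a * b / (T + a + b) - a * b / (T + n + a + b))
      Filter.atTop (nhds (a * b / (T + a + b) - 0)) := by
    refine Filter.Tendsto.sub tendsto_const_nhds (Filter.Tendsto.const_div_atTop ?_ _)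
    have : (fun n : ℕ => T + (n : ℝ) + a + b) = fun n : ℕ => (n : ℝ) + (T + a + b) := by
      funext n; ring
    rw [this]
    exact Filter.tendsto_atTop_add_const_right _ _ tendsto_natCast_atTop_atTop
  rw [sub_zero] at lim
  exact le_of_tendsto' lim h

/-- The ratio `Γ(T+a)Γ(T+b) / (Γ(T)Γ(T+a+b))`. -/
noncomputable def defect (a b T : ℝ) : ℝ :=
  Gamma (T + a) * Gamma (T + b) / (Gamma T * Gamma (T + a + b))

lemma defect_eq {a b T : ℝ} (ha : 0 < a) (hb : 0 < b) (hT : 0 < T) :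
    defect a b T = Real.exp (-secondDiff a b T) := by
  have h1 := Real.Gamma_pos_of_pos hT
  have h2 := Real.Gamma_pos_of_pos (show 0 < T + a by linarith)
  have h3 := Real.Gamma_pos_of_pos (show 0 < T + b by linarith)
  have h4 := Real.Gamma_pos_of_pos (show 0 < T + a + b by linarith)
  rw [← Real.exp_log (show 0 < defect a b T by unfold defect; positivity)]
  congr 1
  unfold defect secondDiff logGamma
  rw [Real.log_div (by positivity) (by positivity), Real.log_mul h2.ne' h3.ne',
    Real.log_mul h1.ne' h4.ne']
  ring

lemma defect_le_one {a b T : ℝ} (ha : 0 < a) (hb : 0 < b) (hT : 0 < T) :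
    defect a b T ≤ 1 := by
  rw [defect_eq ha hb hT, Real.exp_le_one_iff]
  linarith [secondDiff_nonneg ha hb hT]

/-- Uses `exp (-t) ≥ 1 - t`. -/
lemma one_sub_defect_le {a b T : ℝ} (ha : 0 < a) (hb : 0 < b) (hT : 1 < T) :
    1 - defect a b T ≤ b * (a + b + 1) / (T - 1) := by
  rw [defect_eq ha hb (by linarith)]
  linarith [secondDiff_le ha hb hT, Real.add_one_le_exp (-secondDiff a b T)]

/-- Uses `exp (-t) ≤ 1 / (1 + t)` with `t = ab / (T+a+b)`. -/
lemma le_one_sub_defect {a b T : ℝ} (ha : 0 < a) (hb : 0 < b) (hT : 0 < T) :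
    a * b / (T + a + b + a * b) ≤ 1 - defect a b T := by
  rw [defect_eq ha hb hT]
  have h1 := le_secondDiff ha hb hT
  have hp : 0 < T + a + b := by linarith
  have h2 : (T + a + b + a * b) / (T + a + b) ≤ Real.exp (secondDiff a b T) := by
    have := Real.add_one_le_exp (secondDiff a b T)
    have e : (T + a + b + a * b) / (T + a + b) = a * b / (T + a + b) + 1 := by
      field_simp; ring
    linarith
  rw [Real.exp_neg]
  have h3 := inv_anti₀ (by positivity) h2
  rw [inv_div] at h3
  have e : a * b / (T + a + b + a * b) = 1 - (T + a + b) / (T + a + b + a * b) := by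
    have : 0 < T + a + b + a * b := by positivity
    field_simp; ring
  linarith

/-! ### Two-sided bounds on the radicand -/

/-- The first radicand in `μ(i)`, as a function of `u = (i₁+1)/p₁`, `v = i₂/p₂`, `a = 1/p₁`,
`b = 1/p₂` and `T = 1 - b + ∑ⱼ (iⱼ+1)/pⱼ`. -/
noncomputable def radicand (a b u v T : ℝ) : ℝ :=
  Gamma (u + a) / Gamma u * (Gamma (v + b) / Gamma v) *
    (Gamma T ^ 2 / (Gamma (T + a) * Gamma (T + b)))

/-- The comparison `u, v ≲ S ≲ T` makes the powers of `S` in the bounds on the Gamma ratios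
cancel. -/
lemma radicand_le {a b u v T : ℝ} (ha : 0 < a) (hb : 0 < b) (hu : 0 < u) (hv : 0 < v)
    (hT : 1 < T) {S : ℝ} (hS : 0 < S) (h1 : u + a ≤ 2 * S) (h2 : v + b ≤ 2 * S)
    (h3 : S / 2 ≤ T - 1) : radicand a b u v T ≤ 4 ^ a * 4 ^ b := by
  have gT := Real.Gamma_pos_of_pos (show 0 < T by linarith)
  have gu := Real.Gamma_pos_of_pos hu
  have gv := Real.Gamma_pos_of_pos hv
  have A1 : Gamma (u + a) / Gamma u ≤ (2 * S) ^ a := by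
    rw [div_le_iff₀ gu]
    refine (Gamma_add_le hu ha).trans ?_
    gcongr
  have A2 : Gamma (v + b) / Gamma v ≤ (2 * S) ^ b := by
    rw [div_le_iff₀ gv]
    refine (Gamma_add_le hv hb).trans ?_
    gcongr
  have B : ∀ s : ℝ, 0 < s → (S / 2) ^ s * Gamma T ≤ Gamma (T + s) := by
    intro s hs
    refine le_trans ?_ (le_Gamma_add hT hs)
    gcongr
  have pa : 0 < (S / 2) ^ a := Real.rpow_pos_of_pos (by positivity) _
  have pb : 0 < (S / 2) ^ b := Real.rpow_pos_of_pos (by positivity) _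
  have A3 : Gamma T ^ 2 / (Gamma (T + a) * Gamma (T + b)) ≤ 1 / ((S / 2) ^ a * (S / 2) ^ b) := by
    calc _ ≤ Gamma T ^ 2 / (((S / 2) ^ a * Gamma T) * ((S / 2) ^ b * Gamma T)) := by
          gcongr
          exacts [B a ha, B b hb]
      _ = _ := by field_simp
  have e : ∀ s : ℝ, (2 * S) ^ s = 4 ^ s * (S / 2) ^ s := by
    intro s
    rw [← Real.mul_rpow (by norm_num) (by positivity)]
    congr 1; ring
  have gua := Real.Gamma_pos_of_pos (show 0 < u + a by linarith)
  have gvb := Real.Gamma_pos_of_pos (show 0 < v + b by linarith)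
  have gTa := Real.Gamma_pos_of_pos (show 0 < T + a by linarith)
  have gTb := Real.Gamma_pos_of_pos (show 0 < T + b by linarith)
  calc radicand a b u v T
      ≤ (2 * S) ^ a * (2 * S) ^ b * (1 / ((S / 2) ^ a * (S / 2) ^ b)) := by
        unfold radicand
        gcongr
    _ = 4 ^ a * 4 ^ b := by rw [e, e]; field_simp

/-- The converse comparison: `u` and `v` are at least of order `L`, and `T` at most. -/
lemma le_radicand {a b u v T : ℝ} (ha : 0 < a) (hb : 0 < b) (hu : 1 < u) (hv : 1 < v)
    (hT : 0 < T) {L M : ℝ} (hL : 0 < L) (h1 : L * a ≤ u - 1) (h2 : L * b ≤ v - 1)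
    (h3 : T + a ≤ L * M) (h4 : T + b ≤ L * M) :
    (a / M) ^ a * (b / M) ^ b ≤ radicand a b u v T := by
  have hM : 0 < M := by
    by_contra! h
    nlinarith
  have gT := Real.Gamma_pos_of_pos hT
  have gu := Real.Gamma_pos_of_pos (show 0 < u by linarith)
  have gv := Real.Gamma_pos_of_pos (show 0 < v by linarith)
  have gTa := Real.Gamma_pos_of_pos (show 0 < T + a by linarith)
  have gTb := Real.Gamma_pos_of_pos (show 0 < T + b by linarith)
  have A1 : (L * a) ^ a ≤ Gamma (u + a) / Gamma u := by
    rw [le_div_iff₀ gu]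
    refine le_trans ?_ (le_Gamma_add hu ha)
    gcongr
  have A2 : (L * b) ^ b ≤ Gamma (v + b) / Gamma v := by
    rw [le_div_iff₀ gv]
    refine le_trans ?_ (le_Gamma_add hv hb)
    gcongr
  have B : ∀ s : ℝ, 0 < s → T + s ≤ L * M → Gamma (T + s) ≤ (L * M) ^ s * Gamma T := by
    intro s hs h
    refine (Gamma_add_le hT hs).trans ?_
    gcongr
  have A3 : 1 / ((L * M) ^ a * (L * M) ^ b) ≤ Gamma T ^ 2 / (Gamma (T + a) * Gamma (T + b)) := by
    have pa : 0 < (L * M) ^ a := Real.rpow_pos_of_pos (by positivity) _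
    have pb : 0 < (L * M) ^ b := Real.rpow_pos_of_pos (by positivity) _
    calc _ = Gamma T ^ 2 / (((L * M) ^ a * Gamma T) * ((L * M) ^ b * Gamma T)) := by field_simp
      _ ≤ _ := by
          gcongr
          exacts [B a ha h3, B b hb h4]
  have e : ∀ s : ℝ, 0 < s → (L * s) ^ s = (s / M) ^ s * (L * M) ^ s := by
    intro s hs
    rw [← Real.mul_rpow (by positivity) (by positivity)]
    congr 1; field_simp
  have pa : 0 < (L * M) ^ a := Real.rpow_pos_of_pos (by positivity) _
  have pb : 0 < (L * M) ^ b := Real.rpow_pos_of_pos (by positivity) _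
  calc (a / M) ^ a * (b / M) ^ b
      = (L * a) ^ a * (L * b) ^ b * (1 / ((L * M) ^ a * (L * M) ^ b)) := by
        rw [e a ha, e b hb]; field_simp
    _ ≤ radicand a b u v T := by
        unfold radicand
        gcongr

/-! ### The closed form of `μ` and its size -/

/-- `ω₁` at a multi-index agreeing with `i` off the coordinates `x` and `y`; the factors `K`
and `s` collect the contribution of the other coordinates. -/
lemma omegaOne_split (m : ℕ) (p : Fin m → ℝ) (hp : ∀ j, 0 < p j) (x y : Fin m) (hxy : x ≠ y)
    (i : Fin m → ℕ) : ∃ K s : ℝ, 0 < K ∧ 0 ≤ s ∧ ∀ i' : Fin m → ℕ,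
      (∀ j, j ≠ x → j ≠ y → i' j = i j) →
      (∑ j, ((i' j : ℝ) + 1) / p j = (i' x + 1) / p x + (i' y + 1) / p y + s) ∧
      omegaOne m p i' = K * (Gamma ((i' x + 1) / p x) * Gamma ((i' y + 1) / p y) /
        Gamma ((i' x + 1) / p x + (i' y + 1) / p y + s + 1)) := by
  have hy : y ∈ Finset.univ.erase x := by simp [hxy.symm]
  have hpos : ∀ (i' : Fin m → ℕ) (j : Fin m), 0 < ((i' j : ℝ) + 1) / p j :=
    fun i' j => div_pos (by positivity) (hp j)
  refine ⟨(Real.pi ^ m / ∏ j, p j) * ∏ j ∈ (Finset.univ.erase x).erase y, Gamma ((i j + 1) / p j),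
    ∑ j ∈ (Finset.univ.erase x).erase y, ((i j : ℝ) + 1) / p j, ?_, ?_, ?_⟩
  · have h1 : 0 < ∏ j, p j := Finset.prod_pos fun j _ => hp j
    have h2 : 0 < ∏ j ∈ (Finset.univ.erase x).erase y, Gamma ((i j + 1) / p j) :=
      Finset.prod_pos fun j _ => Real.Gamma_pos_of_pos (hpos i j)
    have := Real.pi_pos
    positivity
  · exact Finset.sum_nonneg fun j _ => (hpos i j).le
  · intro i' h
    have hs : ∑ j, ((i' j : ℝ) + 1) / p j = (i' x + 1) / p x + (i' y + 1) / p y +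
        ∑ j ∈ (Finset.univ.erase x).erase y, ((i j : ℝ) + 1) / p j := by
      rw [← Finset.add_sum_erase _ _ (Finset.mem_univ x), ← Finset.add_sum_erase _ _ hy, add_assoc]
      congr 2
      refine Finset.sum_congr rfl fun j hj => ?_
      simp only [Finset.mem_erase, Finset.mem_univ, and_true] at hj
      rw [h j hj.2 hj.1]
    refine ⟨hs, ?_⟩
    have hpr : ∏ j, Gamma (((i' j : ℝ) + 1) / p j) =
        Gamma ((i' x + 1) / p x) * (Gamma ((i' y + 1) / p y) *
        ∏ j ∈ (Finset.univ.erase x).erase y, Gamma (((i j : ℝ) + 1) / p j)) := by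
      rw [← Finset.mul_prod_erase _ _ (Finset.mem_univ x), ← Finset.mul_prod_erase _ _ hy]
      congr 2
      refine Finset.prod_congr rfl fun j hj => ?_
      simp only [Finset.mem_erase, Finset.mem_univ, and_true] at hj
      rw [h j hj.2 hj.1]
    have hSpos : 0 < ∑ j, ((i' j : ℝ) + 1) / p j :=
      Finset.sum_pos (fun j _ => hpos i' j) ⟨x, Finset.mem_univ x⟩
    unfold omegaOne
    rw [hpr, ← hs, Real.Gamma_add_one hSpos.ne']
    have := Real.Gamma_pos_of_pos hSpos
    field_simp

/-- Closed form of `μ(i)`: with `X` the first radicand, the second one is `X * defect²`. -/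
lemma muOne_eq (m : ℕ) (p : Fin m → ℝ) (hp : ∀ j, 0 < p j) (x y : Fin m) (hxy : x ≠ y)
    (i : Fin m → ℕ) (hi : i y ≠ 0) :
    ∃ T : ℝ, T = ∑ j, ((i j : ℝ) + 1) / p j + 1 - 1 / p y ∧ 0 < T ∧
      muOne m p x y i =
        Real.sqrt (radicand (1 / p x) (1 / p y) ((i x + 1) / p x) (i y / p y) T) *
          (1 - defect (1 / p x) (1 / p y) T) := by
  obtain ⟨K, s, hK, hs, H⟩ := omegaOne_split m p hp x y hxy i
  obtain ⟨n, hn⟩ := Nat.exists_eq_succ_of_ne_zero hi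
  have hx := hp x
  have hy := hp y
  have ha : 0 < 1 / p x := by positivity
  have hb : 0 < 1 / p y := by positivity
  obtain ⟨S0, W0⟩ := H i (fun _ _ _ => rfl)
  obtain ⟨-, W1⟩ := H (Function.update (Function.update i x (i x + 1)) y (i y - 1))
    (fun j h1 h2 => by simp [h1, h2])
  obtain ⟨-, W2⟩ := H (Function.update i y (i y - 1)) (fun j h1 h2 => by simp [h2])
  obtain ⟨-, W3⟩ := H (Function.update i x (i x + 1)) (fun j h1 h2 => by simp [h1])
  simp only [Function.update_self, Function.update_of_ne hxy, Function.update_of_ne hxy.symm]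
    at W1 W2 W3
  have hT : 0 < (i x + 1) / p x + i y / p y + s + 1 := by positivity
  refine ⟨(i x + 1) / p x + i y / p y + s + 1, ?_, hT, ?_⟩
  · rw [S0]; ring
  unfold muOne
  rw [if_neg hi, W0, W1, W2, W3]
  have c1 : ((i y - 1 : ℕ) : ℝ) + 1 = i y := by rw [hn]; push_cast; simp
  have hv : 0 < (i y : ℝ) / p y := div_pos (by exact_mod_cast Nat.pos_of_ne_zero hi) hy
  rw [c1]
  push_cast
  have hu : 0 < ((i x : ℝ) + 1) / p x := by positivity
  rw [add_div (i x + 1 : ℝ) 1 (p x), add_div (i y : ℝ) 1 (p y)]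
  generalize ((i x : ℝ) + 1) / p x = u at *
  generalize (i y : ℝ) / p y = v at *
  generalize 1 / p x = a at *
  generalize 1 / p y = b at *
  rw [show u + (v + b) + s + 1 = (u + v + s + 1) + b by ring,
    show u + a + v + s + 1 = (u + v + s + 1) + a by ring,
    show u + a + (v + b) + s + 1 = (u + v + s + 1) + a + b by ring]
  generalize u + v + s + 1 = T at *
  have g1 := Real.Gamma_pos_of_pos hu
  have g2 := Real.Gamma_pos_of_pos hv
  have g3 := Real.Gamma_pos_of_pos hT
  have g4 := Real.Gamma_pos_of_pos (add_pos hu ha)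
  have g5 := Real.Gamma_pos_of_pos (add_pos hv hb)
  have g6 := Real.Gamma_pos_of_pos (add_pos hT ha)
  have g7 := Real.Gamma_pos_of_pos (add_pos hT hb)
  have g8 := Real.Gamma_pos_of_pos (add_pos (add_pos hT ha) hb)
  have E1 : ∀ Q R : ℝ, Q = radicand a b u v T → R = radicand a b u v T * defect a b T ^ 2 →
      |√Q - √R| = √(radicand a b u v T) * (1 - defect a b T) := by
    intro Q R hQ hR
    have hD : 0 ≤ defect a b T := by unfold defect; positivity
    have hD1 := defect_le_one ha hb hT
    rw [hQ, hR, Real.sqrt_mul' _ (sq_nonneg _), Real.sqrt_sq hD, ← mul_one_sub]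
    exact abs_of_nonneg (mul_nonneg (Real.sqrt_nonneg _) (by linarith))
  apply E1
  · unfold radicand
    field_simp
  · unfold radicand defect
    field_simp

/-- Upper bound: `μ(i) = O(1/S)` where `S = ∑ⱼ (iⱼ+1)/pⱼ`. -/
lemma muOne_le (m : ℕ) (p : Fin m → ℝ) (hp : ∀ j, 0 < p j) (x y : Fin m) (hxy : x ≠ y) :
    ∃ C : ℝ, 0 < C ∧ ∀ i, muOne m p x y i ≤ C / ∑ j, ((i j : ℝ) + 1) / p j := by
  have ha : 0 < 1 / p x := by have := hp x; positivity
  have hb : 0 < 1 / p y := by have := hp y; positivity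
  refine ⟨√(4 ^ (1 / p x) * 4 ^ (1 / p y)) * (2 * ((1 / p y) * (1 / p x + 1 / p y + 1))),
    by positivity, fun i => ?_⟩
  have hpos : ∀ j : Fin m, 0 < ((i j : ℝ) + 1) / p j := fun j => div_pos (by positivity) (hp j)
  have hS : 0 < ∑ j, ((i j : ℝ) + 1) / p j :=
    Finset.sum_pos (fun j _ => hpos j) ⟨x, Finset.mem_univ x⟩
  have hle : ∀ j, ((i j : ℝ) + 1) / p j ≤ ∑ j, ((i j : ℝ) + 1) / p j :=
    fun j => Finset.single_le_sum (f := fun j => ((i j : ℝ) + 1) / p j)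
      (fun j _ => (hpos j).le) (Finset.mem_univ j)
  by_cases hi : i y = 0
  · simp only [muOne, if_pos hi]
    positivity
  obtain ⟨T, hT, hT0, hmu⟩ := muOne_eq m p hp x y hxy i hi
  rw [hmu]
  have h1 := hle x
  have h2 := hle y
  have hix : 1 / p x ≤ ((i x : ℝ) + 1) / p x := by
    have := hp x
    gcongr
    linarith [Nat.cast_nonneg (α := ℝ) (i x)]
  have hiy : 1 / p y ≤ (i y : ℝ) / p y := by
    have := hp y
    have : (1 : ℝ) ≤ i y := by exact_mod_cast Nat.pos_of_ne_zero hi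
    gcongr
  rw [add_div (i y : ℝ)] at h2
  have hu := hpos x
  generalize ∑ j, ((i j : ℝ) + 1) / p j = S at *
  generalize ((i x : ℝ) + 1) / p x = u at *
  generalize (i y : ℝ) / p y = v at *
  generalize 1 / p x = a at *
  generalize 1 / p y = b at *
  have hST : S / 2 ≤ T - 1 := by linarith
  have hT1 : 1 < T := by linarith
  have hX := radicand_le ha hb hu (show 0 < v by linarith) hT1 hS (by linarith) (by linarith) hST
  have hD := one_sub_defect_le ha hb hT1
  have hD' : b * (a + b + 1) / (T - 1) ≤ 2 * (b * (a + b + 1)) / S := by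
    calc _ ≤ b * (a + b + 1) / (S / 2) := by gcongr
      _ = _ := by field_simp
  rw [mul_div_assoc]
  have := defect_le_one ha hb hT0
  exact mul_le_mul (Real.sqrt_le_sqrt hX) (hD.trans hD') (by linarith) (Real.sqrt_nonneg _)

/-- Lower bound on the cubes `[n, 2n)^m`, where all the coordinates are comparable. -/
lemma le_muOne (m : ℕ) (p : Fin m → ℝ) (hp : ∀ j, 0 < p j) (x y : Fin m) (hxy : x ≠ y) :
    ∃ c : ℝ, 0 < c ∧ ∃ N : ℕ, ∀ n : ℕ, N ≤ n → ∀ i : Fin m → ℕ,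
      (∀ j, n ≤ i j ∧ i j < 2 * n) → c / n ≤ muOne m p x y i := by
  have ha : 0 < 1 / p x := by have := hp x; positivity
  have hb : 0 < 1 / p y := by have := hp y; positivity
  have hB : 0 ≤ ∑ j, 1 / p j := Finset.sum_nonneg fun j _ => by have := hp j; positivity
  obtain ⟨M, hM⟩ : ∃ M : ℝ, M = 2 * (∑ j, 1 / p j) + 1 + 1 / p x + 1 / p y + 1 / p x * (1 / p y) :=
    ⟨_, rfl⟩
  have hM0 : 0 < M := by rw [hM]; positivity
  refine ⟨√((1 / p x / (2 * M)) ^ (1 / p x) * (1 / p y / (2 * M)) ^ (1 / p y)) *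
    (1 / p x * (1 / p y) / M), by positivity,
    max 1 (max ⌈2 / (1 / p x)⌉₊ ⌈2 / (1 / p y)⌉₊), ?_⟩
  intro n hn i hi
  simp only [max_le_iff] at hn
  obtain ⟨hn1, hn2, hn3⟩ := hn
  have hn2' := (Nat.le_ceil _).trans (show ((⌈2 / (1 / p x)⌉₊ : ℕ) : ℝ) ≤ n by exact_mod_cast hn2)
  have hn3' := (Nat.le_ceil _).trans (show ((⌈2 / (1 / p y)⌉₊ : ℕ) : ℝ) ≤ n by exact_mod_cast hn3)
  rw [div_le_iff₀ ha] at hn2'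
  rw [div_le_iff₀ hb] at hn3'
  have hn1' : (1 : ℝ) ≤ n := by exact_mod_cast hn1
  have hiy : i y ≠ 0 := by have := (hi y).1; omega
  obtain ⟨T, hT, hT0, hmu⟩ := muOne_eq m p hp x y hxy i hiy
  have hS : ∑ j, ((i j : ℝ) + 1) / p j ≤ 2 * n * ∑ j, 1 / p j := by
    rw [Finset.mul_sum]
    refine Finset.sum_le_sum fun j _ => ?_
    rw [mul_one_div]
    have := hp j
    gcongr
    have h := (hi j).2
    have : i j + 1 ≤ 2 * n := h
    exact_mod_cast this
  have hu : n * (1 / p x) + 1 / p x ≤ ((i x : ℝ) + 1) / p x := by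
    rw [mul_one_div, ← add_div]
    have := hp x
    have h : (n : ℝ) ≤ i x := by exact_mod_cast (hi x).1
    gcongr
  have hv : n * (1 / p y) ≤ (i y : ℝ) / p y := by
    rw [mul_one_div]
    have := hp y
    have h : (n : ℝ) ≤ i y := by exact_mod_cast (hi y).1
    gcongr
  rw [hmu]
  generalize ∑ j, ((i j : ℝ) + 1) / p j = S at *
  generalize ∑ j, 1 / p j = B at *
  generalize ((i x : ℝ) + 1) / p x = u at *
  generalize (i y : ℝ) / p y = v at *
  generalize 1 / p x = a at *
  generalize 1 / p y = b at *
  generalize (n : ℝ) = t at *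
  have hab : 0 < a * b := by positivity
  have q1 : a ≤ t * a := le_mul_of_one_le_left ha.le hn1'
  have q2 : b ≤ t * b := le_mul_of_one_le_left hb.le hn1'
  have q3 : a * b ≤ t * (a * b) := le_mul_of_one_le_left hab.le hn1'
  have hMt : t * M = 2 * t * B + t + t * a + t * b + t * (a * b) := by rw [hM]; ring
  have hX := le_radicand (u := u) (v := v) (T := T) (L := t / 2) (M := 2 * M) ha hb
    (by linarith) (by linarith) hT0 (by positivity) (by linarith) (by linarith)
    (by rw [show t / 2 * (2 * M) = t * M by ring, hMt]; linarith)
    (by rw [show t / 2 * (2 * M) = t * M by ring, hMt]; linarith)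
  have hD := le_one_sub_defect ha hb hT0
  have hD' : a * b / M / t ≤ a * b / (T + a + b + a * b) := by
    rw [div_div]
    apply div_le_div_of_nonneg_left hab.le (by positivity)
    rw [mul_comm M, hMt]
    linarith
  rw [mul_div_assoc]
  exact mul_le_mul (Real.sqrt_le_sqrt hX) (hD'.trans hD) (by positivity) (Real.sqrt_nonneg _)

/-! ### Convergence and divergence -/

/-- A product of summable nonnegative functions of separate variables is summable. -/
lemma summable_pi_prod {m : ℕ} (f : Fin m → ℕ → ℝ) (h0 : ∀ j n, 0 ≤ f j n)
    (hf : ∀ j, Summable (f j)) : Summable (fun i : Fin m → ℕ => ∏ j, f j (i j)) := by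
  refine summable_of_sum_le (c := ∏ j, ∑' n, f j n)
    (fun i => Finset.prod_nonneg fun j _ => h0 j _) fun s => ?_
  calc ∑ i ∈ s, ∏ j, f j (i j)
      ≤ ∑ i ∈ Fintype.piFinset fun j => s.image fun i => i j, ∏ j, f j (i j) := by
        refine Finset.sum_le_sum_of_subset_of_nonneg ?_
          fun i _ _ => Finset.prod_nonneg fun j _ => h0 j _
        intro i hi
        simp only [Fintype.mem_piFinset]
        exact fun j => Finset.mem_image_of_mem _ hi
    _ = ∏ j, ∑ n ∈ s.image fun i => i j, f j n := (Finset.prod_univ_sum _ _).symm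
    _ ≤ ∏ j, ∑' n, f j n := by
        refine Finset.prod_le_prod (fun j _ => Finset.sum_nonneg fun n _ => h0 j n) fun j _ => ?_
        exact (hf j).sum_le_tsum _ fun n _ => h0 j n

lemma muOne_nonneg (m : ℕ) (p : Fin m → ℝ) (x y : Fin m) (i : Fin m → ℕ) :
    0 ≤ muOne m p x y i := by
  unfold muOne
  split_ifs
  · exact le_rfl
  · exact abs_nonneg _

/-- Convergence for `q > m`: from `S ≥ (iⱼ+1)/pⱼ` for every `j` one gets
`S^(-q) ≤ ∏ⱼ ((iⱼ+1)/pⱼ)^(-q/m)`, a product of convergent one-variable series. -/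
lemma summable_of_lt (m : ℕ) (p : Fin m → ℝ) (hp : ∀ j, 0 < p j) (x y : Fin m) (hxy : x ≠ y)
    (q : ℝ) (hq : 0 < q) (h : (m : ℝ) < q) :
    Summable (fun i : Fin m → ℕ => muOne m p x y i ^ q) := by
  obtain ⟨C, hC, hmu⟩ := muOne_le m p hp x y hxy
  have hm : 0 < (m : ℝ) := by exact_mod_cast Fin.pos x
  have hr : 1 < q / m := by rwa [one_lt_div hm]
  have hsum := summable_pi_prod (fun (j : Fin m) (n : ℕ) => (((n : ℝ) + 1) / p j) ^ (-(q / m)))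
    (fun j n => Real.rpow_nonneg (div_nonneg (by positivity) (hp j).le) _)
    (fun j => by
      have h1 : Summable (fun n : ℕ => ((n + 1 : ℕ) : ℝ) ^ (-(q / m))) :=
        (summable_nat_add_iff 1).2 (Real.summable_nat_rpow.2 (by linarith))
      refine (h1.mul_right ((p j) ^ (-(q / m)))⁻¹).congr fun n => ?_
      rw [Real.div_rpow (by positivity) (hp j).le, div_eq_mul_inv]
      push_cast
      rfl)
  refine Summable.of_nonneg_of_le (fun i => Real.rpow_nonneg (muOne_nonneg m p x y i) _)
    (fun i => ?_) (hsum.mul_left (C ^ q))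
  have hpos : ∀ j : Fin m, 0 < ((i j : ℝ) + 1) / p j := fun j => div_pos (by positivity) (hp j)
  have hS : 0 < ∑ j, ((i j : ℝ) + 1) / p j :=
    Finset.sum_pos (fun j _ => hpos j) ⟨x, Finset.mem_univ x⟩
  have hle : ∀ j, ((i j : ℝ) + 1) / p j ≤ ∑ j, ((i j : ℝ) + 1) / p j :=
    fun j => Finset.single_le_sum (f := fun j => ((i j : ℝ) + 1) / p j)
      (fun j _ => (hpos j).le) (Finset.mem_univ j)
  have h1 : muOne m p x y i ^ q ≤ (C / ∑ j, ((i j : ℝ) + 1) / p j) ^ q :=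
    Real.rpow_le_rpow (muOne_nonneg m p x y i) (hmu i) hq.le
  refine h1.trans ?_
  rw [Real.div_rpow hC.le hS.le, div_eq_mul_inv, ← Real.rpow_neg hS.le]
  refine mul_le_mul_of_nonneg_left ?_ (Real.rpow_nonneg hC.le _)
  have h2 : (∑ j, ((i j : ℝ) + 1) / p j) ^ (-q) =
      ∏ _k : Fin m, (∑ j, ((i j : ℝ) + 1) / p j) ^ (-(q / m)) := by
    rw [Finset.prod_const, Finset.card_univ, Fintype.card_fin, ← Real.rpow_mul_natCast hS.le]
    congr 1
    field_simp
  rw [h2]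
  refine Finset.prod_le_prod (fun j _ => Real.rpow_nonneg hS.le _) fun j _ => ?_
  exact Real.rpow_le_rpow_of_nonpos (hpos j) (hle j) (by linarith)

/-- Divergence for `q ≤ m`: each cube `[n, 2n)^m` has `n^m` points, each contributing at least
`(c/n)^q`, so its total is at least `c^q`, while these cubes leave every finite set. -/
lemma lt_of_summable (m : ℕ) (p : Fin m → ℝ) (hp : ∀ j, 0 < p j) (x y : Fin m) (hxy : x ≠ y)
    (q : ℝ) (hq : 0 < q) (h : Summable (fun i : Fin m → ℕ => muOne m p x y i ^ q)) :
    (m : ℝ) < q := by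
  by_contra! hqm
  obtain ⟨c, hc, N, hmu⟩ := le_muOne m p hp x y hxy
  obtain ⟨s, hs⟩ := summable_iff_vanishing_norm.1 h (c ^ q) (Real.rpow_pos_of_pos hc _)
  -- The first coordinate of every point of the cube exceeds that of every point of `s`.
  obtain ⟨n, hn⟩ : ∃ n : ℕ, n = max (max 1 N) (s.sup (fun i => i x) + 1) := ⟨_, rfl⟩
  have hn1 : 1 ≤ n := by omega
  have hnN : N ≤ n := by omega
  have hdis : Disjoint (Fintype.piFinset fun _ : Fin m => Finset.Ico n (2 * n)) s := by
    rw [Finset.disjoint_left]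
    intro i hi his
    rw [Fintype.mem_piFinset] at hi
    have h1 := Finset.mem_Ico.1 (hi x)
    have h2 : i x ≤ s.sup (fun i => i x) := Finset.le_sup (f := fun i : Fin m → ℕ => i x) his
    omega
  have hlt := (le_abs_self _).trans_lt (hs _ hdis)
  have hn0 : (1 : ℝ) ≤ n := by exact_mod_cast hn1
  have hge : (n : ℝ) ^ m * (c / n) ^ q ≤
      ∑ i ∈ Fintype.piFinset fun _ : Fin m => Finset.Ico n (2 * n), muOne m p x y i ^ q := by
    have hcard : (Fintype.piFinset fun _ : Fin m => Finset.Ico n (2 * n)).card = n ^ m := by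
      rw [Fintype.card_piFinset_const, Nat.card_Ico]
      congr 1; omega
    have := Finset.card_nsmul_le_sum (Fintype.piFinset fun _ : Fin m => Finset.Ico n (2 * n))
      (fun i => muOne m p x y i ^ q) ((c / n) ^ q) (fun i hi => by
        rw [Fintype.mem_piFinset] at hi
        exact Real.rpow_le_rpow (by positivity)
          (hmu n hnN i fun j => Finset.mem_Ico.1 (hi j)) hq.le)
    rw [hcard, nsmul_eq_mul] at this
    exact_mod_cast this
  have hfin : c ^ q ≤ (n : ℝ) ^ m * (c / n) ^ q := by
    rw [Real.div_rpow hc.le (by positivity), mul_div_assoc', le_div_iff₀ (by positivity), mul_comm]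
    have : (n : ℝ) ^ q ≤ (n : ℝ) ^ m := by
      rw [← Real.rpow_natCast]
      exact Real.rpow_le_rpow_of_exponent_le hn0 hqm
    gcongr
  linarith

end EggOne

/-- For `m > 1`, `∑_{i ∈ ℕ^m} μ(i)^q` converges iff `q > m`. -/
theorem cross_commutator_summable_iff_egg_one (m : ℕ) (hm : 1 < m)
    (p : Fin m → ℝ) (hp : ∀ j, 0 < p j) (q : ℝ) (hq : 0 < q) :
    Summable (fun i : Fin m → ℕ => muOne m p ⟨0, by omega⟩ ⟨1, hm⟩ i ^ q) ↔
      (m : ℝ) < q :=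
  have hxy : (⟨0, by omega⟩ : Fin m) ≠ ⟨1, hm⟩ := by simp
  ⟨EggOne.lt_of_summable m p hp _ _ hxy q hq, EggOne.summable_of_lt m p hp _ _ hxy q hq⟩
end
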